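/- arXiv:1502.05496 — 8 statements merged into one kernel-verified Lean document; each statement's English description precedes it below -/
import Mathlib

section
/- Let H be a complex Hilbert space and let C ⊆ H ⊕ H be a monotone relation. Then the following are equivalent: (i) C is maximal monotone; (ii) there exists λ > 0 such that (1 + λC)[H] = H; (iii) for every λ > 0 one has (1 + λC)[H] = H. -/
open scoped ComplexInnerProductSpace

/-- A relation `C ⊆ H ⊕ H` is monotone if `Re⟪x−u, y−v⟫ ≥ 0` for all `(x,y), (u,v) ∈ C`. -/
def IsMonotoneRel {Hs : Type*} [NormedAddCommGroup Hs] [InnerProductSpace ℂ Hs]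
    (C : Set (Hs × Hs)) : Prop :=
  ∀ p ∈ C, ∀ q ∈ C, 0 ≤ (⟪p.1 - q.1, p.2 - q.2⟫ : ℂ).re

/-- A relation is maximal monotone if it is monotone and admits no proper monotone extension. -/
def IsMaximalMonotoneRel {Hs : Type*} [NormedAddCommGroup Hs] [InnerProductSpace ℂ Hs]
    (C : Set (Hs × Hs)) : Prop :=
  IsMonotoneRel C ∧ ∀ B : Set (Hs × Hs), IsMonotoneRel B → C ⊆ B → B = C

/-- The relation `1 + λC = {(u, u + λv) : (u,v) ∈ C}`. -/
def onePlusSmul {Hs : Type*} [NormedAddCommGroup Hs] [InnerProductSpace ℂ Hs]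
    (l : ℝ) (C : Set (Hs × Hs)) : Set (Hs × Hs) :=
  {q | ∃ p ∈ C, q = (p.1, p.1 + l • p.2)}

/-- The post-set `B[N] = {y : ∃ x ∈ N, (x,y) ∈ B}`. -/
def postSet {Hs : Type*} [NormedAddCommGroup Hs] [InnerProductSpace ℂ Hs]
    (B : Set (Hs × Hs)) (N : Set Hs) : Set Hs :=
  {y | ∃ x ∈ N, (x, y) ∈ B}

open scoped RealInnerProductSpace in
theorem minty_aux_min {E : Type*} [NormedAddCommGroup E] [InnerProductSpace ℝ E]
    [CompleteSpace E] (S : Set (E × ℝ)) (hS : Convex ℝ S) (hne : S.Nonempty)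
    (h : ∀ p ∈ S, p.2 - ‖p.1‖ ^ 2 / 4 ≤ 0) :
    ∃ x : E, ∀ p ∈ S, ‖x‖ ^ 2 + inner ℝ x p.1 + p.2 ≤ 0 := by
  set D : E × ℝ → ℝ := fun p => p.2 - ‖p.1‖ ^ 2 / 4 with hD
  have hbdd : BddAbove (D '' S) := ⟨0, by rintro _ ⟨p, hp, rfl⟩; exact h p hp⟩
  have hne' : (D '' S).Nonempty := hne.image D
  set m := sSup (D '' S) with hm
  have hm0 : m ≤ 0 := csSup_le hne' (by rintro _ ⟨p, hp, rfl⟩; exact h p hp)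
  have hle : ∀ p ∈ S, D p ≤ m := fun p hp => le_csSup hbdd ⟨p, hp, rfl⟩
  have hex : ∀ n : ℕ, ∃ p ∈ S, m - 1 / ((n : ℝ) + 1) < D p := by
    intro n
    have hpos : (0 : ℝ) < 1 / ((n : ℝ) + 1) := by positivity
    obtain ⟨_, ⟨p, hp, rfl⟩, hlt⟩ := exists_lt_of_lt_csSup hne'
      (show m - 1 / ((n : ℝ) + 1) < sSup (D '' S) by linarith)
    exact ⟨p, hp, hlt⟩
  choose s hsS hsD using hex
  -- the value of `D` on a segment
  have key : ∀ p q : E × ℝ, ∀ t : ℝ, D ((1 - t) • p + t • q) =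
      (1 - t) * D p + t * D q + t * (1 - t) * ‖q.1 - p.1‖ ^ 2 / 4 := by
    intro p q t
    simp only [hD, Prod.fst_add, Prod.snd_add, Prod.smul_fst, Prod.smul_snd, smul_eq_mul]
    rw [norm_add_sq_real, norm_sub_sq_real, norm_smul, norm_smul, inner_smul_left,
      inner_smul_right, mul_pow, mul_pow, Real.norm_eq_abs, Real.norm_eq_abs, sq_abs, sq_abs,
      real_inner_comm q.1 p.1]
    simp only [conj_trivial]
    ring
  have seg : ∀ p ∈ S, ∀ q ∈ S, ∀ t : ℝ, 0 ≤ t → t ≤ 1 →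
      (1 - t) * D p + t * D q + t * (1 - t) * ‖q.1 - p.1‖ ^ 2 / 4 ≤ m := by
    intro p hp q hq t h0 h1
    rw [← key]
    exact hle _ (hS hp hq (by linarith) h0 (by ring))
  have hinv : Filter.Tendsto (fun n : ℕ => 1 / ((n : ℝ) + 1)) Filter.atTop (nhds 0) :=
    tendsto_one_div_add_atTop_nhds_zero_nat
  have hc : CauchySeq (fun n => (s n).1) := by
    refine cauchySeq_of_le_tendsto_0' (fun n : ℕ => Real.sqrt (16 * (1 / ((n : ℝ) + 1)))) ?_ ?_
    · intro n k hnk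
      apply Real.le_sqrt_of_sq_le
      rw [dist_comm, dist_eq_norm]
      have h1 := seg _ (hsS n) _ (hsS k) (1 / 2) (by norm_num) (by norm_num)
      have h2 := hsD n
      have h3 := hsD k
      have h4 : 1 / ((k : ℝ) + 1) ≤ 1 / ((n : ℝ) + 1) := by
        have : (n : ℝ) ≤ k := by exact_mod_cast hnk
        gcongr
      nlinarith
    · have := (hinv.const_mul 16).sqrt
      simpa using this
  obtain ⟨a, ha⟩ := cauchySeq_tendsto_of_complete hc
  refine ⟨(-(1 / 2) : ℝ) • a, fun q hq => ?_⟩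
  have lim : ∀ t : ℝ, 0 ≤ t → t ≤ 1 →
      (1 - t) * (m - 0) + t * D q + t * (1 - t) * ‖q.1 - a‖ ^ 2 / 4 ≤ m := by
    intro t h0 h1
    have ht : Filter.Tendsto (fun n : ℕ => (1 - t) * (m - 1 / ((n : ℝ) + 1)) + t * D q
        + t * (1 - t) * ‖q.1 - (s n).1‖ ^ 2 / 4) Filter.atTop
        (nhds ((1 - t) * (m - 0) + t * D q + t * (1 - t) * ‖q.1 - a‖ ^ 2 / 4)) :=
      (((hinv.const_sub m).const_mul _).add_const _).add
        (((((ha.const_sub q.1).norm).pow 2).const_mul _).div_const _)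
    refine le_of_tendsto' ht fun n => ?_
    have h2 := seg _ (hsS n) _ hq t h0 h1
    have h3 := mul_le_mul_of_nonneg_left (hsD n).le (show 0 ≤ 1 - t by linarith)
    linarith
  set R := ‖q.1 - a‖ ^ 2 / 4 with hR
  have hR0 : 0 ≤ R := by positivity
  have hQ : D q - m + R ≤ 0 := by
    by_contra! hQ
    set Q := D q - m + R with hQd
    have hpos : 0 < Q + R := by linarith
    have h1 := lim (Q / (Q + R)) (by positivity) (by rw [div_le_one hpos]; linarith)
    set t := Q / (Q + R) with htd
    have htQ : t * (Q + R) = Q := by rw [htd]; field_simp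
    have htp : 0 < t := by positivity
    have h2 : t * (Q - t * R) ≤ 0 := by
      have : t * (1 - t) * ‖q.1 - a‖ ^ 2 / 4 = t * (1 - t) * R := by rw [hR]; ring
      rw [this] at h1
      have : D q = Q + m - R := by rw [hQd]; ring
      rw [this] at h1
      linarith
    have h3 : Q - t * R = t * Q := by linarith
    rw [h3] at h2
    have : 0 < t * (t * Q) := by positivity
    linarith
  have e1 : ‖(-(1 / 2) : ℝ) • a‖ ^ 2 = ‖a‖ ^ 2 / 4 := by
    rw [norm_smul, mul_pow, Real.norm_eq_abs, sq_abs]; ring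
  have e2 : ‖q.1 - a‖ ^ 2 = ‖q.1‖ ^ 2 - 2 * inner ℝ a q.1 + ‖a‖ ^ 2 := by
    rw [norm_sub_sq_real, real_inner_comm]
  rw [e1, real_inner_smul_left]
  rw [hR, e2] at hQ
  simp only [hD] at hQ
  linarith

theorem minty_aux_hull {E : Type*} [NormedAddCommGroup E] [InnerProductSpace ℝ E]
    (C : Set (E × E)) (hC : ∀ p ∈ C, ∀ q ∈ C, 0 ≤ inner ℝ (p.1 - q.1) (p.2 - q.2)) :
    ∀ z ∈ convexHull ℝ ((fun p : E × E => (p.1, p.2, inner ℝ p.1 p.2)) '' C),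
      inner ℝ z.1 z.2.1 ≤ z.2.2 := by
  set T := (fun p : E × E => ((p.1, p.2, inner ℝ p.1 p.2) : E × E × ℝ)) '' C with hT
  have conv : ∀ w : E × E × ℝ, Convex ℝ {z : E × E × ℝ |
      inner ℝ z.1 w.2.1 + inner ℝ w.1 z.2.1 ≤ z.2.2 + w.2.2} := by
    intro w z hz z' hz' a b ha hb hab
    simp only [Set.mem_ofPred_eq, Prod.fst_add, Prod.snd_add, Prod.smul_fst, Prod.smul_snd,
      smul_eq_mul, inner_add_left, inner_add_right, real_inner_smul_left,
      real_inner_smul_right] at *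
    have h1 := mul_le_mul_of_nonneg_left hz ha
    have h2 := mul_le_mul_of_nonneg_left hz' hb
    have h3 : w.2.2 = a * w.2.2 + b * w.2.2 := by rw [← add_mul, hab, one_mul]
    rw [h3]
    linarith
  have s1 : ∀ w ∈ T, ∀ z ∈ convexHull ℝ T,
      inner ℝ z.1 w.2.1 + inner ℝ w.1 z.2.1 ≤ z.2.2 + w.2.2 := by
    rintro _ ⟨p, hp, rfl⟩ z hz
    refine convexHull_min ?_ (conv _) hz
    rintro _ ⟨q, hq, rfl⟩
    have := hC p hp q hq
    simp only [inner_sub_left, inner_sub_right] at this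
    simp only [Set.mem_ofPred_eq]
    linarith
  intro z hz
  have s2 : z ∈ {z' : E × E × ℝ |
      inner ℝ z'.1 z.2.1 + inner ℝ z.1 z'.2.1 ≤ z'.2.2 + z.2.2} := by
    refine convexHull_min ?_ (conv z) hz
    intro w hw
    have := s1 w hw z hz
    simp only [Set.mem_ofPred_eq]
    linarith
  simp only [Set.mem_ofPred_eq] at s2
  linarith

theorem minty_aux_real {E : Type*} [NormedAddCommGroup E] [InnerProductSpace ℝ E]
    [CompleteSpace E]
    (C : Set (E × E)) (hC : ∀ p ∈ C, ∀ q ∈ C, 0 ≤ inner ℝ (p.1 - q.1) (p.2 - q.2)) :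
    ∃ x : E, ∀ p ∈ C, 0 ≤ inner ℝ (x - p.1) (-x - p.2) := by
  rcases C.eq_empty_or_nonempty with rfl | hne
  · exact ⟨0, by simp⟩
  set T := (fun p : E × E => ((p.1, p.2, inner ℝ p.1 p.2) : E × E × ℝ)) '' C with hT
  have hh := minty_aux_hull C hC
  rw [← hT] at hh
  let S : Set (E × ℝ) := {q | ∃ z ∈ convexHull ℝ T, q = (z.2.1 - z.1, - z.2.2)}
  have hS : Convex ℝ S := by
    rintro _ ⟨z, hz, rfl⟩ _ ⟨w, hw, rfl⟩ a b ha hb hab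
    refine ⟨a • z + b • w, convex_convexHull ℝ T hz hw ha hb hab, ?_⟩
    ext
    · simp only [Prod.fst_add, Prod.snd_add, Prod.smul_fst, Prod.smul_snd]
      module
    · simp only [Prod.snd_add, Prod.smul_snd, smul_eq_mul]
      ring
  have mem : ∀ p ∈ C, (p.2 - p.1, - inner ℝ p.1 p.2) ∈ S := fun p hp =>
    ⟨(p.1, p.2, inner ℝ p.1 p.2), subset_convexHull ℝ T ⟨p, hp, rfl⟩, rfl⟩
  obtain ⟨x, hx⟩ := minty_aux_min S hS (hne.elim fun p hp => ⟨_, mem p hp⟩) (by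
    rintro _ ⟨z, hz, rfl⟩
    have h1 := hh z hz
    have h2 : ‖z.2.1 - z.1‖ ^ 2 = ‖z.2.1 + z.1‖ ^ 2 - 4 * inner ℝ z.1 z.2.1 := by
      rw [norm_sub_sq_real, norm_add_sq_real, real_inner_comm]; ring
    have h3 := sq_nonneg ‖z.2.1 + z.1‖
    dsimp only
    linarith)
  refine ⟨x, fun p hp => ?_⟩
  have := hx _ (mem p hp)
  simp only [inner_sub_left, inner_sub_right, inner_neg_right, real_inner_self_eq_norm_sq] at *
  rw [real_inner_comm x p.1]
  linarith

theorem minty_aux_all {Hs : Type*} [NormedAddCommGroup Hs] [InnerProductSpace ℂ Hs]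
    [CompleteSpace Hs] (C : Set (Hs × Hs)) (hC : IsMaximalMonotoneRel C) (l : ℝ) (hl : 0 < l) :
    postSet (onePlusSmul l C) Set.univ = Set.univ := by
  refine Set.eq_univ_of_forall fun z => ?_
  letI : InnerProductSpace ℝ Hs := InnerProductSpace.complexToReal
  have hre : ∀ a b : Hs, (inner ℂ a b : ℂ).re = inner ℝ a b := fun a b => rfl
  obtain ⟨x, hx⟩ := minty_aux_real ((fun p : Hs × Hs => (p.1, l • p.2 - z)) '' C) (by
    rintro _ ⟨p, hp, rfl⟩ _ ⟨q, hq, rfl⟩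
    have h1 := hC.1 p hp q hq
    rw [hre] at h1
    dsimp only
    rw [show l • p.2 - z - (l • q.2 - z) = l • (p.2 - q.2) by module, real_inner_smul_right]
    positivity)
  have hx' : ∀ p ∈ C, 0 ≤ inner ℝ (x - p.1) (l⁻¹ • (z - x) - p.2) := by
    intro p hp
    have h1 := hx _ ⟨p, hp, rfl⟩
    have h2 : -x - (l • p.2 - z) = l • (l⁻¹ • (z - x) - p.2) := by
      rw [smul_sub, smul_smul, mul_inv_cancel₀ hl.ne', one_smul]; abel
    dsimp only at h1
    rw [h2, real_inner_smul_right] at h1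
    exact nonneg_of_mul_nonneg_right h1 hl
  have hB : IsMonotoneRel (insert (x, l⁻¹ • (z - x)) C) := by
    intro p hp q hq
    rw [hre]
    rcases hp with rfl | hp <;> rcases hq with rfl | hq
    · simp
    · exact hx' q hq
    · have := hx' p hp
      rw [← inner_neg_neg, neg_sub, neg_sub]
      exact this
    · rw [← hre]; exact hC.1 p hp q hq
  have hmem : (x, l⁻¹ • (z - x)) ∈ C := by
    rw [← hC.2 _ hB (Set.subset_insert _ _)]
    exact Set.mem_insert _ _
  refine ⟨x, trivial, _, hmem, ?_⟩
  dsimp only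
  rw [smul_smul, mul_inv_cancel₀ hl.ne', one_smul, add_sub_cancel]

theorem minty_aux_max {Hs : Type*} [NormedAddCommGroup Hs] [InnerProductSpace ℂ Hs]
    (C : Set (Hs × Hs)) (hC : IsMonotoneRel C) (l : ℝ) (hl : 0 < l)
    (h : postSet (onePlusSmul l C) Set.univ = Set.univ) : IsMaximalMonotoneRel C := by
  letI : InnerProductSpace ℝ Hs := InnerProductSpace.complexToReal
  have hre : ∀ a b : Hs, (inner ℂ a b : ℂ).re = inner ℝ a b := fun a b => rfl
  refine ⟨hC, fun B hB hCB => Set.Subset.antisymm ?_ hCB⟩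
  rintro ⟨x, y⟩ hxy
  have hz : x + l • y ∈ postSet (onePlusSmul l C) Set.univ := by rw [h]; trivial
  obtain ⟨u', -, ⟨u, v⟩, huv, heq⟩ := hz
  have heq : x + l • y = u + l • v := (Prod.ext_iff.1 heq).2
  have h1 := hB _ hxy _ (hCB huv)
  rw [hre] at h1
  dsimp only at h1
  have h2 : x - u = (-l) • (y - v) := by
    have : x = u + l • v - l • y := by rw [← heq]; abel
    rw [this]; module
  rw [h2, real_inner_smul_left, real_inner_self_eq_norm_sq] at h1
  have h3 : ‖y - v‖ ^ 2 = 0 := by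
    have := sq_nonneg ‖y - v‖
    nlinarith
  have h4 : y - v = 0 := by simpa using h3
  rw [h4, smul_zero] at h2
  rw [sub_eq_zero.1 h4, sub_eq_zero.1 h2]
  exact huv

/-- **Minty's theorem.** For a monotone relation `C` on a complex Hilbert space `H`, the
following are equivalent: (i) `C` is maximal monotone; (ii) `(1 + λC)[H] = H` for some `λ > 0`;
(iii) `(1 + λC)[H] = H` for all `λ > 0`. -/
theorem minty_characterization {Hs : Type*} [NormedAddCommGroup Hs] [InnerProductSpace ℂ Hs]
    [CompleteSpace Hs] (C : Set (Hs × Hs)) (hC : IsMonotoneRel C) :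
    (IsMaximalMonotoneRel C ↔ ∃ l : ℝ, 0 < l ∧ postSet (onePlusSmul l C) Set.univ = Set.univ) ∧
    (IsMaximalMonotoneRel C ↔ ∀ l : ℝ, 0 < l → postSet (onePlusSmul l C) Set.univ = Set.univ) := by
  refine ⟨⟨fun h => ⟨1, one_pos, minty_aux_all C h 1 one_pos⟩, ?_⟩,
    ⟨fun h l hl => minty_aux_all C h l hl, fun h => minty_aux_max C hC 1 one_pos (h 1 one_pos)⟩⟩
  rintro ⟨l, hl, h⟩
  exact minty_aux_max C hC l hl h
end

section
/- Let H be a complex Hilbert space and let C ⊆ H ⊕ H be a closed linear relation (a closed linear subspace of H ⊕ H). Then C is maximal monotone if and only if both C and its adjoint relation C* are monotone. -/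
open scoped ComplexInnerProductSpace

/-- The adjoint relation `C* = {(v,−u) : (u,v) ∈ C}^⊥`: a pair `(x,y)` belongs to `C*` if and
only if `⟪v,x⟫ = ⟪u,y⟫` for all `(u,v) ∈ C`. -/
def adjointRel {Hs : Type*} [NormedAddCommGroup Hs] [InnerProductSpace ℂ Hs]
    (C : Set (Hs × Hs)) : Set (Hs × Hs) :=
  {q | ∀ p ∈ C, (⟪p.2, q.1⟫ : ℂ) = ⟪p.1, q.2⟫}

/-- A closed linear relation `C` on a complex Hilbert space is maximal monotone if and only if
both `C` and its adjoint relation `C*` are monotone. -/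
theorem closed_linear_maximal_monotone_iff {Hs : Type*} [NormedAddCommGroup Hs]
    [InnerProductSpace ℂ Hs] [CompleteSpace Hs] (C : Submodule ℂ (Hs × Hs))
    (hclosed : IsClosed (C : Set (Hs × Hs))) :
    IsMaximalMonotoneRel (C : Set (Hs × Hs)) ↔
      IsMonotoneRel (C : Set (Hs × Hs)) ∧ IsMonotoneRel (adjointRel (C : Set (Hs × Hs))) := by
  constructor
  · rintro ⟨hm, hmax⟩
    refine ⟨hm, ?_⟩
    -- the adjoint is closed under differences, so nonnegativity of the form suffices
    have key : ∀ q ∈ adjointRel (C : Set (Hs × Hs)), 0 ≤ (⟪q.1, q.2⟫ : ℂ).re := by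
      rintro ⟨x, y⟩ hq
      by_contra hneg
      simp only [not_le] at hneg
      have hrel : ∀ p ∈ C, 0 ≤ (⟪p.1 - x, p.2 - (-y)⟫ : ℂ).re := by
        rintro ⟨u, v⟩ hp
        have h1 := congrArg Complex.re (hq (u, v) hp)
        have h2 := hm (u, v) hp (0, 0) C.zero_mem
        have h3 : (⟪x, v⟫ : ℂ).re = (⟪v, x⟫ : ℂ).re := inner_re_symm (𝕜 := ℂ) x v
        simp only [sub_zero] at h2
        simp only [sub_neg_eq_add, inner_sub_left, inner_add_right, Complex.sub_re,
          Complex.add_re] at h1 ⊢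
        linarith
      have hB : IsMonotoneRel (insert (x, -y) (C : Set (Hs × Hs))) := by
        rintro p (rfl | hp) q (rfl | hq')
        · simp
        · have := hrel q hq'
          rw [← inner_neg_neg, neg_sub, neg_sub]
          exact this
        · exact hrel p hp
        · exact hm p hp q hq'
      have hmem : (x, -y) ∈ (C : Set (Hs × Hs)) := by
        rw [← hmax _ hB (Set.subset_insert _ _)]
        exact Set.mem_insert _ _
      have h1 := congrArg Complex.re (hq _ hmem)
      have h3 : (⟪x, y⟫ : ℂ).re = (⟪y, x⟫ : ℂ).re := inner_re_symm (𝕜 := ℂ) x y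
      simp only [inner_neg_left, Complex.neg_re] at h1
      linarith
    intro p hp q hq
    refine key (p - q) fun r hr => ?_
    have h1 := hp r hr
    have h2 := hq r hr
    simp only [Prod.fst_sub, Prod.snd_sub, inner_sub_right, h1, h2]
  · rintro ⟨hm, hadj⟩
    refine ⟨hm, ?_⟩
    let f : C →L[ℂ] Hs :=
      (ContinuousLinearMap.fst ℂ Hs Hs + ContinuousLinearMap.snd ℂ Hs Hs).comp C.subtypeL
    have hf : ∀ p : C, f p = p.1.1 + p.1.2 := fun p => rfl
    have : CompleteSpace C := hclosed.completeSpace_coe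
    have hanti : AntilipschitzWith 1 f := by
      refine ContinuousLinearMap.antilipschitz_of_bound f fun p => ?_
      rw [hf]
      have h2 := hm p.1 p.2 (0, 0) C.zero_mem
      simp only [sub_zero] at h2
      have h3 : ‖p.1.1 + p.1.2‖ ^ 2 = ‖p.1.1‖ ^ 2 + 2 * (⟪p.1.1, p.1.2⟫ : ℂ).re + ‖p.1.2‖ ^ 2 :=
        norm_add_sq (𝕜 := ℂ) _ _
      simp only [NNReal.coe_one, one_mul]
      refine max_le ?_ ?_
      · refine (pow_le_pow_iff_left₀ (norm_nonneg _) (norm_nonneg _) two_ne_zero).1 ?_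
        change ‖p.1.1‖ ^ 2 ≤ _
        nlinarith [sq_nonneg ‖p.1.2‖]
      · refine (pow_le_pow_iff_left₀ (norm_nonneg _) (norm_nonneg _) two_ne_zero).1 ?_
        change ‖p.1.2‖ ^ 2 ≤ _
        nlinarith [sq_nonneg ‖p.1.1‖]
    have hcl : IsClosed (f.range : Set Hs) := by
      have := hanti.isClosed_range f.uniformContinuous
      exact this
    have : CompleteSpace f.range := hcl.completeSpace_coe
    have htop : f.range = ⊤ := by
      rw [← Submodule.orthogonal_eq_bot_iff, Submodule.eq_bot_iff]
      intro z hz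
      have hz1 : (z, -z) ∈ adjointRel (C : Set (Hs × Hs)) := by
        intro p hp
        have h := (Submodule.mem_orthogonal _ _).1 hz (f ⟨p, hp⟩) ⟨⟨p, hp⟩, rfl⟩
        rw [hf, inner_add_left] at h
        simp only [inner_neg_right]
        linear_combination h
      have hz0 : ((0 : Hs), (0 : Hs)) ∈ adjointRel (C : Set (Hs × Hs)) := by
        intro p hp
        simp
      have h := hadj _ hz1 _ hz0
      simp only [sub_zero, inner_neg_right, Complex.neg_re] at h
      have h' : (⟪z, z⟫ : ℂ).re = ‖z‖ ^ 2 := inner_self_eq_norm_sq (𝕜 := ℂ) z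
      have : ‖z‖ = 0 := by
        have := sq_nonneg ‖z‖
        exact pow_eq_zero_iff (two_ne_zero) |>.1 (by linarith)
      exact norm_eq_zero.1 this
    intro B hB hCB
    refine Set.Subset.antisymm ?_ hCB
    rintro ⟨x, y⟩ hxy
    obtain ⟨⟨⟨u, v⟩, hp⟩, hpe⟩ : x + y ∈ f.range := htop ▸ Submodule.mem_top
    have hpe' : u + v = x + y := hpe
    have h := hB _ hxy _ (hCB hp)
    have hyv : y - v = -(x - u) := by
      rw [neg_sub, sub_eq_sub_iff_add_eq_add, add_comm y x, hpe']
    simp only [hyv, inner_neg_right, Complex.neg_re] at h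
    have h' : (⟪x - u, x - u⟫ : ℂ).re = ‖x - u‖ ^ 2 := inner_self_eq_norm_sq (𝕜 := ℂ) (x - u)
    have h0 : ‖x - u‖ = 0 := by
      have := sq_nonneg ‖x - u‖
      exact pow_eq_zero_iff (two_ne_zero) |>.1 (by linarith)
    have hxu : x = u := sub_eq_zero.1 (norm_eq_zero.1 h0)
    have hyv' : y = v := by
      rw [hxu, sub_self, neg_zero] at hyv
      exact sub_eq_zero.1 hyv
    rw [hxu, hyv']
    exact hp
end

section
/- Let E, H be complex Hilbert spaces and G₀, D₀, G, D as in the standing setup. Then BD(G) = [{0}](1 − DG), i.e. BD(G) = {u ∈ D(G) : Gu ∈ D(D) and DGu = u}, and BD(D) = [{0}](1 − GD), i.e. BD(D) = {w ∈ D(D) : Dw ∈ D(G) and GDw = w}. -/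
open scoped ComplexInnerProductSpace
open Filter Topology Classical

noncomputable section

variable {E H : Type*}
  [NormedAddCommGroup E] [InnerProductSpace ℂ E] [CompleteSpace E]
  [NormedAddCommGroup H] [InnerProductSpace ℂ H] [CompleteSpace H]

/-- The operator `G := (−D₀)*`. -/
def Gop (D₀ : H →ₗ.[ℂ] E) : E →ₗ.[ℂ] H := (-D₀).adjoint

/-- The operator `D := −(G₀)*`. -/
def Dop (G₀ : E →ₗ.[ℂ] H) : H →ₗ.[ℂ] E := -(G₀.adjoint)

/-- Pointwise application of `G`, defined to be `0` off the domain. -/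
def Gap (D₀ : H →ₗ.[ℂ] E) (u : E) : H :=
  if h : u ∈ (Gop D₀).domain then Gop D₀ ⟨u, h⟩ else 0

/-- Pointwise application of `D`, defined to be `0` off the domain. -/
def Dap (G₀ : E →ₗ.[ℂ] H) (w : H) : E :=
  if h : w ∈ (Dop G₀).domain then Dop G₀ ⟨w, h⟩ else 0

/-- The graph inner product of `D_G`: `⟪x,y⟫_E + ⟪Gx,Gy⟫_H`. -/
def innG (D₀ : H →ₗ.[ℂ] E) (x y : E) : ℂ := ⟪x, y⟫ + ⟪Gap D₀ x, Gap D₀ y⟫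

/-- The graph inner product of `D_D`: `⟪x,y⟫_H + ⟪Dx,Dy⟫_E`. -/
def innD (G₀ : E →ₗ.[ℂ] H) (x y : H) : ℂ := ⟪x, y⟫ + ⟪Dap G₀ x, Dap G₀ y⟫

/-- The boundary data space `BD(G)`, the orthogonal complement of `D(G₀)` in `D_G`. -/
def BDG (G₀ : E →ₗ.[ℂ] H) (D₀ : H →ₗ.[ℂ] E) : Set E :=
  {u | u ∈ (Gop D₀).domain ∧ ∀ v ∈ G₀.domain, innG D₀ u v = 0}

/-- The boundary data space `BD(D)`, the orthogonal complement of `D(D₀)` in `D_D`. -/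
def BDD (G₀ : E →ₗ.[ℂ] H) (D₀ : H →ₗ.[ℂ] E) : Set H :=
  {w | w ∈ (Dop G₀).domain ∧ ∀ v ∈ D₀.domain, innD G₀ w v = 0}

theorem Dop_char (G₀ : E →ₗ.[ℂ] H) (hd : Dense (G₀.domain : Set E)) (w : H) (z : E) :
    (w ∈ (Dop G₀).domain ∧ Dap G₀ w = z) ↔
      ∀ v : G₀.domain, ⟪z, (v : E)⟫ + ⟪w, G₀ v⟫ = 0 := by
  constructor
  · rintro ⟨hw, rfl⟩ v
    have hw' : w ∈ (G₀.adjoint).domain := hw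
    have h := LinearPMap.adjoint_isFormalAdjoint hd ⟨w, hw'⟩ v
    have e : Dap G₀ w = -(G₀.adjoint ⟨w, hw'⟩) := by
      unfold Dap
      rw [dif_pos hw]
      rfl
    rw [e, inner_neg_left, h]
    simp
  · intro h
    have h' : ∀ x : G₀.domain, ⟪-z, (x : E)⟫ = ⟪w, G₀ x⟫ := by
      intro x
      rw [inner_neg_left]
      linear_combination -(h x)
    have hw' : w ∈ (G₀.adjoint).domain :=
      LinearPMap.mem_adjoint_domain_of_exists w ⟨-z, h'⟩
    have hw : w ∈ (Dop G₀).domain := hw'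
    refine ⟨hw, ?_⟩
    have h2 := LinearPMap.adjoint_apply_eq hd ⟨w, hw'⟩ h'
    have e : Dap G₀ w = -(G₀.adjoint ⟨w, hw'⟩) := by
      unfold Dap
      rw [dif_pos hw]
      rfl
    rw [e, h2, neg_neg]

theorem Gop_char (D₀ : H →ₗ.[ℂ] E) (hd : Dense (D₀.domain : Set H)) (u : E) (z : H) :
    (u ∈ (Gop D₀).domain ∧ Gap D₀ u = z) ↔
      ∀ v : D₀.domain, ⟪z, (v : H)⟫ + ⟪u, D₀ v⟫ = 0 := by
  have hd' : Dense ((-D₀).domain : Set H) := hd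
  constructor
  · rintro ⟨hu, rfl⟩ v
    have h : ⟪(-D₀).adjoint ⟨u, hu⟩, (v : H)⟫ = ⟪u, -(D₀ v)⟫ :=
      LinearPMap.adjoint_isFormalAdjoint hd' ⟨u, hu⟩ v
    have e : Gap D₀ u = (-D₀).adjoint ⟨u, hu⟩ := by
      unfold Gap
      rw [dif_pos hu]
      rfl
    rw [e, h, inner_neg_right]
    simp
  · intro h
    have h' : ∀ x : (-D₀).domain, ⟪z, (x : H)⟫ = ⟪u, (-D₀) x⟫ := by
      intro x
      have h3 : ⟪u, (-D₀) x⟫ = ⟪u, -(D₀ x)⟫ := rfl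
      rw [h3, inner_neg_right]
      linear_combination h x
    have hu : u ∈ (Gop D₀).domain :=
      LinearPMap.mem_adjoint_domain_of_exists u ⟨z, h'⟩
    refine ⟨hu, ?_⟩
    have h2 := LinearPMap.adjoint_apply_eq hd' ⟨u, hu⟩ h'
    unfold Gap
    rw [dif_pos hu]
    exact h2

/-- `BD(G) = [{0}](1 − DG)` and `BD(D) = [{0}](1 − GD)`: an element `u ∈ D(G)` belongs to
`BD(G)` iff `Gu ∈ D(D)` and `DGu = u`, and `w ∈ D(D)` belongs to `BD(D)` iff `Dw ∈ D(G)` and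
`GDw = w`. -/
theorem bdg_eq_ker_one_sub (G₀ : E →ₗ.[ℂ] H) (D₀ : H →ₗ.[ℂ] E)
    (hG₀dense : Dense (G₀.domain : Set E)) (hD₀dense : Dense (D₀.domain : Set H))
    (hG₀closed : G₀.IsClosed) (hD₀closed : D₀.IsClosed)
    (hsub : G₀ ≤ Gop D₀) :
    BDG G₀ D₀ = {u | u ∈ (Gop D₀).domain ∧ Gap D₀ u ∈ (Dop G₀).domain ∧
        Dap G₀ (Gap D₀ u) = u} ∧
    BDD G₀ D₀ = {w | w ∈ (Dop G₀).domain ∧ Dap G₀ w ∈ (Gop D₀).domain ∧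
        Gap D₀ (Dap G₀ w) = w} := by
  have hG : ∀ v : G₀.domain, Gap D₀ (v : E) = G₀ v := by
    intro v
    have hv : (v : E) ∈ (Gop D₀).domain := hsub.1 v.2
    unfold Gap
    rw [dif_pos hv]
    exact (hsub.2 (x := v) (y := ⟨v, hv⟩) rfl).symm
  have hD : ∀ v : D₀.domain, Dap G₀ (v : H) = D₀ v := by
    intro v
    refine ((Dop_char G₀ hG₀dense (v : H) (D₀ v)).2 ?_).2
    intro x
    have h := (Gop_char D₀ hD₀dense (x : E) (G₀ x)).1 ⟨hsub.1 x.2, hG x⟩ v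
    have h2 := congrArg (starRingEnd ℂ) h
    rw [map_add, inner_conj_symm, inner_conj_symm, map_zero] at h2
    linear_combination h2
  constructor
  · ext u
    simp only [BDG, Set.mem_setOf_eq]
    refine and_congr_right fun _ => ?_
    rw [Dop_char G₀ hG₀dense]
    constructor
    · intro h v
      rw [← hG v]
      exact h v v.2
    · intro h v hv
      have := h ⟨v, hv⟩
      rw [← hG] at this
      exact this
  · ext w
    simp only [BDD, Set.mem_setOf_eq]
    refine and_congr_right fun _ => ?_
    rw [Gop_char D₀ hD₀dense]
    constructor
    · intro h v
      rw [← hD v]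
      exact h v v.2
    · intro h v hv
      have := h ⟨v, hv⟩
      rw [← hD] at this
      exact this
end
end

section
/- Let E, H be complex Hilbert spaces and G₀, D₀, G, D as in the standing setup. Then G maps BD(G) into BD(D) and D maps BD(D) into BD(G); that is, G[BD(G)] ⊆ BD(D) and D[BD(D)] ⊆ BD(G). -/
open scoped ComplexInnerProductSpace
open Filter Topology Classical

noncomputable section

variable {E H : Type*}
  [NormedAddCommGroup E] [InnerProductSpace ℂ E] [CompleteSpace E]
  [NormedAddCommGroup H] [InnerProductSpace ℂ H] [CompleteSpace H]

theorem G_char (D₀ : H →ₗ.[ℂ] E) (hd : Dense (D₀.domain : Set H)) (u : E) (y : H) :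
    (u ∈ (Gop D₀).domain ∧ Gap D₀ u = y) ↔ ∀ x : D₀.domain, ⟪y, (x : H)⟫ = -⟪u, D₀ x⟫ := by
  have hd' : Dense ((-D₀).domain : Set H) := hd
  constructor
  · rintro ⟨hu, rfl⟩ x
    have h := LinearPMap.adjoint_isFormalAdjoint hd' ⟨u, hu⟩ x
    rw [LinearPMap.neg_apply, inner_neg_right] at h
    rw [Gap, dif_pos hu]
    exact h
  · intro h
    have h' : ∀ x : (-D₀).domain, ⟪y, (x : H)⟫ = ⟪u, (-D₀) x⟫ := by
      intro x
      rw [LinearPMap.neg_apply, inner_neg_right]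
      exact h x
    have hu : u ∈ (Gop D₀).domain := LinearPMap.mem_adjoint_domain_of_exists u ⟨y, h'⟩
    refine ⟨hu, ?_⟩
    rw [Gap, dif_pos hu]
    exact LinearPMap.adjoint_apply_eq hd' ⟨u, hu⟩ h'

theorem D_char (G₀ : E →ₗ.[ℂ] H) (hd : Dense (G₀.domain : Set E)) (w : H) (y : E) :
    (w ∈ (Dop G₀).domain ∧ Dap G₀ w = y) ↔ ∀ x : G₀.domain, ⟪y, (x : E)⟫ = -⟪w, G₀ x⟫ := by
  constructor
  · rintro ⟨hw, rfl⟩ x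
    have h := LinearPMap.adjoint_isFormalAdjoint hd ⟨w, hw⟩ x
    have h3 : Dap G₀ w = -(G₀.adjoint ⟨w, hw⟩) := by
      rw [Dap, dif_pos hw]
      rfl
    rw [h3, inner_neg_left, h]
  · intro h
    have h' : ∀ x : G₀.domain, ⟪-y, (x : E)⟫ = ⟪w, G₀ x⟫ := by
      intro x
      rw [inner_neg_left, h x, neg_neg]
    have hw : w ∈ (Dop G₀).domain := LinearPMap.mem_adjoint_domain_of_exists w ⟨-y, h'⟩
    refine ⟨hw, ?_⟩
    have h2 := LinearPMap.adjoint_apply_eq hd ⟨w, hw⟩ h'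
    rw [Dap, dif_pos hw, ← neg_neg y, ← h2]
    rfl

/-- `G` maps `BD(G)` into `BD(D)` and `D` maps `BD(D)` into `BD(G)`:
`G[BD(G)] ⊆ BD(D)` and `D[BD(D)] ⊆ BD(G)`. -/
theorem bdg_mapsTo (G₀ : E →ₗ.[ℂ] H) (D₀ : H →ₗ.[ℂ] E)
    (hG₀dense : Dense (G₀.domain : Set E)) (hD₀dense : Dense (D₀.domain : Set H))
    (hG₀closed : G₀.IsClosed) (hD₀closed : D₀.IsClosed)
    (hsub : G₀ ≤ Gop D₀) :
    (∀ u ∈ BDG G₀ D₀, Gap D₀ u ∈ BDD G₀ D₀) ∧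
    (∀ w ∈ BDD G₀ D₀, Dap G₀ w ∈ BDG G₀ D₀) := by
  have hG : ∀ v : G₀.domain, Gap D₀ v = G₀ v := by
    intro v
    have hv : (v : E) ∈ (Gop D₀).domain := hsub.1 v.2
    rw [Gap, dif_pos hv]
    exact (hsub.2 (x := v) (y := ⟨v, hv⟩) rfl).symm
  have hD : ∀ w : D₀.domain, Dap G₀ w = D₀ w := by
    intro w
    refine ((D_char G₀ hG₀dense w (D₀ w)).2 ?_).2
    intro v
    have h := (G_char D₀ hD₀dense v (G₀ v)).1 ⟨hsub.1 v.2, hG v⟩ w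
    rw [← inner_conj_symm, ← inner_conj_symm (w : H), h]
    simp
  constructor
  · rintro u ⟨hu, hort⟩
    obtain ⟨h1, h2⟩ := (D_char G₀ hG₀dense (Gap D₀ u) u).2 (by
      intro x
      have h := hort x x.2
      rw [innG, hG] at h
      exact eq_neg_of_add_eq_zero_left h)
    refine ⟨h1, fun v hv => ?_⟩
    have h := (G_char D₀ hD₀dense u _).1 ⟨hu, rfl⟩ ⟨v, hv⟩
    rw [innD, h2, hD ⟨v, hv⟩, h, neg_add_cancel]
  · rintro w ⟨hw, hort⟩
    obtain ⟨h1, h2⟩ := (G_char D₀ hD₀dense (Dap G₀ w) w).2 (by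
      intro x
      have h := hort x x.2
      rw [innD, hD] at h
      exact eq_neg_of_add_eq_zero_left h)
    refine ⟨h1, fun v hv => ?_⟩
    have h := (D_char G₀ hG₀dense w _).1 ⟨hw, rfl⟩ ⟨v, hv⟩
    rw [innG, h2, hG ⟨v, hv⟩, h, neg_add_cancel]
end
end

section
/- Let E, H be complex Hilbert spaces and G₀, D₀, G, D as in the standing setup. The operators Ġ : BD(G) → BD(D), x ↦ Gx and Ḋ : BD(D) → BD(G), x ↦ Dx are well-defined unitary operators (bijective and inner-product preserving with respect to the graph inner products), and they are mutually adjoint and inverse: (Ġ)* = Ḋ, i.e. ⟨Ġx, w⟩_{D_D} = ⟨x, Ḋw⟩_{D_G} for all x ∈ BD(G), w ∈ BD(D), and ḊĠ = 1 on BD(G), ĠḊ = 1 on BD(D). -/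
open scoped ComplexInnerProductSpace
open Filter Topology Classical

noncomputable section

variable {E H : Type*}
  [NormedAddCommGroup E] [InnerProductSpace ℂ E] [CompleteSpace E]
  [NormedAddCommGroup H] [InnerProductSpace ℂ H] [CompleteSpace H]

/-- Characterization of the graph of `D`. -/
theorem Dap_char (G₀ : E →ₗ.[ℂ] H) (hd : Dense (G₀.domain : Set E)) (w : H) (e : E) :
    (w ∈ (Dop G₀).domain ∧ Dap G₀ w = e) ↔ ∀ v : G₀.domain, ⟪e, (v : E)⟫ = -⟪w, G₀ v⟫ := by
  constructor
  · rintro ⟨hw, rfl⟩ v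
    have hw' : w ∈ G₀.adjoint.domain := hw
    have h1 : Dap G₀ w = -(G₀.adjoint ⟨w, hw'⟩) := by
      rw [Dap, dif_pos hw]; rfl
    have h2 := LinearPMap.adjoint_isFormalAdjoint hd ⟨w, hw'⟩ v
    rw [h1, inner_neg_left, h2]
  · intro h
    have h' : ∀ v : G₀.domain, ⟪-e, (v : E)⟫ = ⟪w, G₀ v⟫ := by
      intro v
      rw [inner_neg_left, h v, neg_neg]
    have hw' : w ∈ G₀.adjoint.domain := LinearPMap.mem_adjoint_domain_of_exists w ⟨-e, h'⟩
    have hw : w ∈ (Dop G₀).domain := hw'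
    have h1 : Dap G₀ w = -(G₀.adjoint ⟨w, hw'⟩) := by
      rw [Dap, dif_pos hw]; rfl
    refine ⟨hw, ?_⟩
    rw [h1, LinearPMap.adjoint_apply_eq hd ⟨w, hw'⟩ h', neg_neg]

/-- Characterization of the graph of `G`. -/
theorem Gap_char (D₀ : H →ₗ.[ℂ] E) (hd : Dense (D₀.domain : Set H)) (u : E) (k : H) :
    (u ∈ (Gop D₀).domain ∧ Gap D₀ u = k) ↔ ∀ v : D₀.domain, ⟪k, (v : H)⟫ = -⟪u, D₀ v⟫ := by
  have hd' : Dense ((-D₀).domain : Set H) := hd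
  constructor
  · rintro ⟨hu, rfl⟩ v
    have h2 := LinearPMap.adjoint_isFormalAdjoint hd' ⟨u, hu⟩ v
    rw [← inner_neg_right, Gap, dif_pos hu]
    exact h2
  · intro h
    have h' : ∀ v : (-D₀).domain, ⟪k, (v : H)⟫ = ⟪u, (-D₀) v⟫ := by
      intro v
      have := h v
      rw [← inner_neg_right] at this
      exact this
    have hu : u ∈ (Gop D₀).domain := LinearPMap.mem_adjoint_domain_of_exists u ⟨k, h'⟩
    refine ⟨hu, ?_⟩
    rw [Gap, dif_pos hu]
    exact LinearPMap.adjoint_apply_eq hd' ⟨u, hu⟩ h'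

/-- The operators `Ġ : BD(G) → BD(D), x ↦ Gx` and `Ḋ : BD(D) → BD(G), x ↦ Dx` are well-defined
unitary operators (bijective and preserving the graph inner products), they are mutually inverse
(`ḊĠ = 1` on `BD(G)` and `ĠḊ = 1` on `BD(D)`) and mutually adjoint
(`⟪Ġx, w⟫_{D_D} = ⟪x, Ḋw⟫_{D_G}` for `x ∈ BD(G)`, `w ∈ BD(D)`). -/
theorem bdg_unitaries (G₀ : E →ₗ.[ℂ] H) (D₀ : H →ₗ.[ℂ] E)
    (hG₀dense : Dense (G₀.domain : Set E)) (hD₀dense : Dense (D₀.domain : Set H))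
    (hG₀closed : G₀.IsClosed) (hD₀closed : D₀.IsClosed)
    (hsub : G₀ ≤ Gop D₀) :
    -- well-defined
    (∀ u ∈ BDG G₀ D₀, Gap D₀ u ∈ BDD G₀ D₀) ∧
    (∀ w ∈ BDD G₀ D₀, Dap G₀ w ∈ BDG G₀ D₀) ∧
    -- bijective
    Set.BijOn (Gap D₀) (BDG G₀ D₀) (BDD G₀ D₀) ∧
    Set.BijOn (Dap G₀) (BDD G₀ D₀) (BDG G₀ D₀) ∧
    -- inner-product preserving (unitarity)
    (∀ x ∈ BDG G₀ D₀, ∀ y ∈ BDG G₀ D₀, innD G₀ (Gap D₀ x) (Gap D₀ y) = innG D₀ x y) ∧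
    (∀ w ∈ BDD G₀ D₀, ∀ z ∈ BDD G₀ D₀, innG D₀ (Dap G₀ w) (Dap G₀ z) = innD G₀ w z) ∧
    -- mutually inverse: ḊĠ = 1 and ĠḊ = 1
    (∀ x ∈ BDG G₀ D₀, Dap G₀ (Gap D₀ x) = x) ∧
    (∀ w ∈ BDD G₀ D₀, Gap D₀ (Dap G₀ w) = w) ∧
    -- mutually adjoint: (Ġ)* = Ḋ
    (∀ x ∈ BDG G₀ D₀, ∀ w ∈ BDD G₀ D₀, innD G₀ (Gap D₀ x) w = innG D₀ x (Dap G₀ w)) := by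
  have gap0 : ∀ v : G₀.domain, Gap D₀ v = G₀ v := by
    intro v
    have hv : (v : E) ∈ (Gop D₀).domain := hsub.1 v.2
    rw [Gap, dif_pos hv]
    exact (hsub.2 (x := v) (y := ⟨v, hv⟩) rfl).symm
  have dap0 : ∀ v : D₀.domain, Dap G₀ v = D₀ v := by
    intro v
    refine ((Dap_char G₀ hG₀dense v (D₀ v)).2 ?_).2
    intro u
    have h := (Gap_char D₀ hD₀dense u (G₀ u)).1 ⟨hsub.1 u.2, gap0 u⟩ v
    rw [← inner_conj_symm, ← inner_conj_symm (v : H), h, map_neg, neg_neg]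
  have A : ∀ u ∈ BDG G₀ D₀, Gap D₀ u ∈ (Dop G₀).domain ∧ Dap G₀ (Gap D₀ u) = u := by
    rintro u ⟨hu, h⟩
    refine (Dap_char G₀ hG₀dense _ _).2 fun v => ?_
    have := h v v.2
    rw [innG, gap0] at this
    exact eq_neg_of_add_eq_zero_left this
  have B : ∀ w ∈ BDD G₀ D₀, Dap G₀ w ∈ (Gop D₀).domain ∧ Gap D₀ (Dap G₀ w) = w := by
    rintro u ⟨hu, h⟩
    refine (Gap_char D₀ hD₀dense _ _).2 fun v => ?_
    have := h v v.2
    rw [innD, dap0] at this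
    exact eq_neg_of_add_eq_zero_left this
  have WG : ∀ u ∈ BDG G₀ D₀, Gap D₀ u ∈ BDD G₀ D₀ := by
    intro u hu
    refine ⟨(A u hu).1, fun v hv => ?_⟩
    have h := (Gap_char D₀ hD₀dense u _).1 ⟨hu.1, rfl⟩ ⟨v, hv⟩
    rw [innD, (A u hu).2, dap0 ⟨v, hv⟩, h, neg_add_cancel]
  have WD : ∀ w ∈ BDD G₀ D₀, Dap G₀ w ∈ BDG G₀ D₀ := by
    intro u hu
    refine ⟨(B u hu).1, fun v hv => ?_⟩
    have h := (Dap_char G₀ hG₀dense u _).1 ⟨hu.1, rfl⟩ ⟨v, hv⟩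
    rw [innG, (B u hu).2, gap0 ⟨v, hv⟩, h, neg_add_cancel]
  have IG : Set.LeftInvOn (Dap G₀) (Gap D₀) (BDG G₀ D₀) := fun x hx => (A x hx).2
  have ID : Set.LeftInvOn (Gap D₀) (Dap G₀) (BDD G₀ D₀) := fun x hx => (B x hx).2
  refine ⟨WG, WD, Set.InvOn.bijOn ⟨IG, ID⟩ WG WD, Set.InvOn.bijOn ⟨ID, IG⟩ WD WG,
    ?_, ?_, fun x hx => (A x hx).2, fun x hx => (B x hx).2, ?_⟩
  · intro x hx y hy
    rw [innD, innG, (A x hx).2, (A y hy).2, add_comm]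
  · intro x hx y hy
    rw [innD, innG, (B x hx).2, (B y hy).2, add_comm]
  · intro x hx w hw
    rw [innD, innG, (A x hx).2, (B w hw).2, add_comm]
end
end

section
/- Let E, H be complex Hilbert spaces and G₀, D₀, G, D as in the standing setup. Let M ⊆ D(G) × D(D) and let A ⊆ (E ⊕ H) ⊕ (E ⊕ H) be the relation A := {((u,w),(Dw,Gu)) : (u,w) ∈ M}, i.e. the restriction of the block operator matrix (0 D; G 0) to the domain M. Then A is maximal monotone if and only if there exists a maximal monotone relation h ⊆ BD(G) ⊕ BD(G) such that M = {(u,w) ∈ D(G) × D(D) : (π_{BD(G)}u, Ḋπ_{BD(D)}w) ∈ h}. -/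
open scoped ComplexInnerProductSpace
open Filter Topology Classical

noncomputable section

variable {E H : Type*}
  [NormedAddCommGroup E] [InnerProductSpace ℂ E] [CompleteSpace E]
  [NormedAddCommGroup H] [InnerProductSpace ℂ H] [CompleteSpace H]

/-- Monotonicity of a relation on the Hilbert space `E ⊕ H` (the real part of the inner
product of `E ⊕ H` is the sum of the real parts of the component inner products). -/
def IsMonotoneRelProd (C : Set ((E × H) × (E × H))) : Prop :=
  ∀ p ∈ C, ∀ q ∈ C,
    0 ≤ ((⟪p.1.1 - q.1.1, p.2.1 - q.2.1⟫ : ℂ) + ⟪p.1.2 - q.1.2, p.2.2 - q.2.2⟫).re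

/-- Maximal monotonicity of a relation on `E ⊕ H`. -/
def IsMaximalMonotoneRelProd (C : Set ((E × H) × (E × H))) : Prop :=
  IsMonotoneRelProd C ∧
    ∀ B : Set ((E × H) × (E × H)), IsMonotoneRelProd B → C ⊆ B → B = C

/-- Monotonicity of a relation on `BD(G)` with respect to the graph inner product. -/
def IsMonotoneBDG (D₀ : H →ₗ.[ℂ] E) (h : Set (E × E)) : Prop :=
  ∀ p ∈ h, ∀ q ∈ h, 0 ≤ (innG D₀ (p.1 - q.1) (p.2 - q.2)).re

/-- Maximal monotonicity of a relation on the Hilbert space `BD(G)` (with the graph inner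
product): `h` is monotone and has no proper monotone extension within `BD(G) ⊕ BD(G)`. -/
def IsMaximalMonotoneBDG (G₀ : E →ₗ.[ℂ] H) (D₀ : H →ₗ.[ℂ] E) (h : Set (E × E)) : Prop :=
  h ⊆ (BDG G₀ D₀) ×ˢ (BDG G₀ D₀) ∧ IsMonotoneBDG D₀ h ∧
    ∀ b : Set (E × E), b ⊆ (BDG G₀ D₀) ×ˢ (BDG G₀ D₀) → IsMonotoneBDG D₀ b → h ⊆ b → b = h

section Helpers

variable {X Y : Type*}
  [NormedAddCommGroup X] [InnerProductSpace ℂ X] [CompleteSpace X]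
  [NormedAddCommGroup Y] [InnerProductSpace ℂ Y] [CompleteSpace Y]

/-- `(w,f)` belongs to the graph of `-T*`. -/
def NRel (T : X →ₗ.[ℂ] Y) (w : Y) (f : X) : Prop :=
  ∀ u : T.domain, (⟪f, (u : X)⟫ : ℂ) = -⟪w, T u⟫

theorem NRel.sub {T : X →ₗ.[ℂ] Y} {w w' : Y} {f f' : X} (h : NRel T w f) (h' : NRel T w' f') :
    NRel T (w - w') (f - f') := by
  intro u
  rw [inner_sub_left, inner_sub_left, h u, h' u]; ring

theorem NRel.add {T : X →ₗ.[ℂ] Y} {w w' : Y} {f f' : X} (h : NRel T w f) (h' : NRel T w' f') :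
    NRel T (w + w') (f + f') := by
  intro u
  rw [inner_add_left, inner_add_left, h u, h' u]; ring

theorem NRel.unique {T : X →ₗ.[ℂ] Y} (hT : Dense (T.domain : Set X)) {w : Y} {f f' : X}
    (h : NRel T w f) (h' : NRel T w f') : f = f' := by
  apply hT.eq_of_inner_left ℂ
  intro v hv
  rw [h ⟨v, hv⟩, h' ⟨v, hv⟩]

theorem gop_iff (D₀ : H →ₗ.[ℂ] E) (hd : Dense (D₀.domain : Set H)) (u : E) (f : H) :
    NRel D₀ u f ↔ u ∈ (Gop D₀).domain ∧ Gap D₀ u = f := by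
  have hd' : Dense ((-D₀).domain : Set H) := hd
  have key : ∀ h : u ∈ (Gop D₀).domain, NRel D₀ u (Gap D₀ u) := by
    intro h v
    have := LinearPMap.adjoint_isFormalAdjoint hd' ⟨u, h⟩ v
    simp only [Gap, h, dif_pos]
    rw [LinearPMap.neg_apply, inner_neg_right] at this
    exact this
  constructor
  · intro h
    have hm : u ∈ (Gop D₀).domain := by
      apply LinearPMap.mem_adjoint_domain_of_exists
      refine ⟨f, fun v => ?_⟩
      rw [LinearPMap.neg_apply, inner_neg_right]
      exact h v
    exact ⟨hm, (key hm).unique hd h⟩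
  · rintro ⟨h, rfl⟩
    exact key h

theorem dop_iff (G₀ : E →ₗ.[ℂ] H) (hd : Dense (G₀.domain : Set E)) (w : H) (f : E) :
    NRel G₀ w f ↔ w ∈ (Dop G₀).domain ∧ Dap G₀ w = f := by
  have key : ∀ h : w ∈ (Dop G₀).domain, NRel G₀ w (Dap G₀ w) := by
    intro h v
    have := LinearPMap.adjoint_isFormalAdjoint hd ⟨w, h⟩ v
    simp only [Dap, h, dif_pos]
    unfold Dop
    rw [LinearPMap.neg_apply, inner_neg_left]
    exact congrArg Neg.neg this
  constructor
  · intro h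
    have hm : w ∈ (Dop G₀).domain := by
      apply LinearPMap.mem_adjoint_domain_of_exists
      refine ⟨-f, fun v => ?_⟩
      rw [inner_neg_left, h v, neg_neg]
    exact ⟨hm, (key hm).unique hd h⟩
  · rintro ⟨h, rfl⟩
    exact key h

theorem nrel_symm_sub {S : X →ₗ.[ℂ] Y} {T : Y →ₗ.[ℂ] X}
    (h : ∀ v : S.domain, NRel T (v : X) (S v)) (s : T.domain) : NRel S (s : Y) (T s) := by
  intro v
  have := h v s
  rw [← inner_conj_symm, ← inner_conj_symm (s : Y), this]
  simp

/-- Decomposition of a point of the graph of `-T*` along `S`. -/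
structure Dec (S : X →ₗ.[ℂ] Y) (T : Y →ₗ.[ℂ] X) (u : X) (f : Y) (x : X) (a : Y) : Prop where
  r1 : NRel T u f
  r2 : NRel T x a
  r3 : NRel S a x
  r4 : u - x ∈ S.domain

theorem Dec.sub {S : X →ₗ.[ℂ] Y} {T : Y →ₗ.[ℂ] X} {u u' : X} {f f' : Y} {x x' : X} {a a' : Y}
    (h : Dec S T u f x a) (h' : Dec S T u' f' x' a') :
    Dec S T (u - u') (f - f') (x - x') (a - a') :=
  ⟨h.r1.sub h'.r1, h.r2.sub h'.r2, h.r3.sub h'.r3, by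
    have := S.domain.sub_mem h.r4 h'.r4
    rwa [sub_sub_sub_comm] at this⟩

theorem NRel.conj {T : X →ₗ.[ℂ] Y} {w : Y} {f : X} (h : NRel T w f) (u : T.domain) :
    (⟪(u : X), f⟫ : ℂ) + ⟪T u, w⟫ = 0 := by
  rw [← inner_conj_symm, h u, map_neg, inner_conj_symm]; ring

theorem green {S : X →ₗ.[ℂ] Y} {T : Y →ₗ.[ℂ] X} (hT : Dense (T.domain : Set Y))
    (hS : Dense (S.domain : Set X))
    (hsub : ∀ v : S.domain, NRel T (v : X) (S v))
    {u x : X} {f a : Y} {w z : Y} {g y : X}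
    (h : Dec S T u f x a) (k : Dec T S w g z y) :
    (⟪u, g⟫ : ℂ) + ⟪f, w⟫ = ⟪x, y⟫ + ⟪a, z⟫ := by
  have hf : f = a + S ⟨u - x, h.r4⟩ := by
    have := (h.r1.sub h.r2).unique hT (hsub ⟨u - x, h.r4⟩)
    rw [← this]; abel
  have hg : g = y + T ⟨w - z, k.r4⟩ := by
    have := (k.r1.sub k.r2).unique hS (nrel_symm_sub hsub ⟨w - z, k.r4⟩)
    rw [← this]; abel
  have e1 := k.r1.conj ⟨u - x, h.r4⟩
  have e2 := h.r2 ⟨w - z, k.r4⟩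
  have e3 : (⟪u, g⟫ : ℂ) + ⟪f, w⟫ = ⟪x, g⟫ + ⟪a, w⟫ := by
    rw [hf, inner_add_left]
    simp only [inner_sub_left] at e1
    linear_combination e1
  rw [e3, hg, inner_add_right]
  simp only [inner_sub_right] at e2
  linear_combination e2

theorem lin_zero {a b : ℝ} (h : ∀ t : ℝ, 0 ≤ a + t * b) : b = 0 := by
  by_contra hb
  have := h (-(a + 1) / b)
  rw [div_mul_cancel₀ _ hb] at this
  linarith

/-- If a point is monotonically related to an affine translate, it belongs to the graph. -/
theorem nrel_of_mono {T : X →ₗ.[ℂ] Y} {w : Y} {f : X} (c : ℝ)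
    (h : ∀ u : T.domain, 0 ≤ c + ((⟪f, (u : X)⟫ : ℂ) + ⟪w, T u⟫).re) : NRel T w f := by
  have key : ∀ u : T.domain, ((⟪f, (u : X)⟫ : ℂ) + ⟪w, T u⟫).re = 0 := by
    intro u
    apply lin_zero (a := c)
    intro t
    have := h ((t : ℂ) • u)
    rw [LinearPMap.map_smul, Submodule.coe_smul, inner_smul_right, inner_smul_right, ← mul_add,
      Complex.re_ofReal_mul] at this
    exact this
  intro u
  rw [← add_eq_zero_iff_eq_neg]
  apply Complex.ext
  · exact key u
  · have := key (Complex.I • u)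
    rw [LinearPMap.map_smul, Submodule.coe_smul, inner_smul_right, inner_smul_right, ← mul_add,
      Complex.I_mul_re] at this
    exact neg_eq_zero.1 this

end Helpers

section Helpers2

variable {X Y : Type*}
  [NormedAddCommGroup X] [InnerProductSpace ℂ X] [CompleteSpace X]
  [NormedAddCommGroup Y] [InnerProductSpace ℂ Y] [CompleteSpace Y]

theorem Dec.unique {S : X →ₗ.[ℂ] Y} {T : Y →ₗ.[ℂ] X} (hT : Dense (T.domain : Set Y))
    (hsub : ∀ v : S.domain, NRel T (v : X) (S v))
    {u x x' : X} {f f' a a' : Y} (h : Dec S T u f x a) (h' : Dec S T u f' x' a') : x = x' := by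
  have hd : x - x' ∈ S.domain := by
    have := S.domain.sub_mem h'.r4 h.r4
    rwa [sub_sub_sub_cancel_left] at this
  have r := h.r3.sub h'.r3
  have e := (h.r2.sub h'.r2).unique hT (hsub ⟨x - x', hd⟩)
  have i := r ⟨x - x', hd⟩
  rw [← e] at i
  have i2 := congrArg Complex.re i
  simp only [Complex.neg_re] at i2
  have p1 : 0 ≤ (⟪a - a', a - a'⟫ : ℂ).re := inner_self_nonneg (𝕜 := ℂ)
  have p2 : (⟪x - x', x - x'⟫ : ℂ).re = ‖x - x'‖ ^ 2 := inner_self_eq_norm_sq (𝕜 := ℂ) _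
  rw [p2] at i2
  have : ‖x - x'‖ = 0 := by nlinarith [sq_nonneg ‖x - x'‖]
  exact sub_eq_zero.1 (norm_eq_zero.1 this)

theorem Dec.mk_add {S : X →ₗ.[ℂ] Y} {T : Y →ₗ.[ℂ] X}
    (hsub : ∀ v : S.domain, NRel T (v : X) (S v)) {x : X} {a : Y}
    (h : NRel T x a) (h' : NRel S a x) (v : S.domain) :
    Dec S T (x + v) (a + S v) x a :=
  ⟨h.add (hsub v), h, h', by simp⟩

end Helpers2

theorem mem_bdg_iff (G₀ : E →ₗ.[ℂ] H) (D₀ : H →ₗ.[ℂ] E)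
    (hD : Dense (D₀.domain : Set H))
    (hsub : ∀ v : G₀.domain, NRel D₀ (v : E) (G₀ v)) (x : E) :
    x ∈ BDG G₀ D₀ ↔ NRel D₀ x (Gap D₀ x) ∧ NRel G₀ (Gap D₀ x) x := by
  have hG : ∀ v : G₀.domain, Gap D₀ v = G₀ v := fun v => ((gop_iff D₀ hD _ _).1 (hsub v)).2
  constructor
  · rintro ⟨h1, h2⟩
    refine ⟨(gop_iff D₀ hD _ _).2 ⟨h1, rfl⟩, fun v => ?_⟩
    have := h2 v v.2
    rw [innG, hG v] at this
    exact eq_neg_of_add_eq_zero_left this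
  · rintro ⟨h1, h2⟩
    refine ⟨((gop_iff D₀ hD _ _).1 h1).1, fun v hv => ?_⟩
    rw [innG, hG ⟨v, hv⟩, h2 ⟨v, hv⟩]
    simp

theorem mem_bdd (G₀ : E →ₗ.[ℂ] H) (D₀ : H →ₗ.[ℂ] E)
    (hG : Dense (G₀.domain : Set E))
    (hsub : ∀ v : D₀.domain, NRel G₀ (v : H) (D₀ v)) (x : H)
    (hx : x ∈ BDD G₀ D₀) : NRel G₀ x (Dap G₀ x) ∧ NRel D₀ (Dap G₀ x) x := by
  have hD : ∀ v : D₀.domain, Dap G₀ v = D₀ v := fun v => ((dop_iff G₀ hG _ _).1 (hsub v)).2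
  obtain ⟨h1, h2⟩ := hx
  refine ⟨(dop_iff G₀ hG _ _).2 ⟨h1, rfl⟩, fun v => ?_⟩
  have := h2 v v.2
  rw [innD, hD v] at this
  exact eq_neg_of_add_eq_zero_left this

/-- **Characterization of maximal monotone restrictions of `(0 D; G 0)`** ([Trostorff 2014,
Thm. 3.1]). Let `M ⊆ D(G) × D(D)` and let `A` be the restriction of the block operator matrix
`(0 D; G 0)` with domain `M`, i.e. `A = {((u,w),(Dw,Gu)) : (u,w) ∈ M}`. Then `A` is maximal
monotone iff there is a maximal monotone relation `h ⊆ BD(G) ⊕ BD(G)` with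
`M = {(u,w) ∈ D(G) × D(D) : (π_{BD(G)}u, Ḋπ_{BD(D)}w) ∈ h}`. -/
theorem maximal_monotone_restriction_char (G₀ : E →ₗ.[ℂ] H) (D₀ : H →ₗ.[ℂ] E)
    (hG₀dense : Dense (G₀.domain : Set E)) (hD₀dense : Dense (D₀.domain : Set H))
    (hG₀closed : G₀.IsClosed) (hD₀closed : D₀.IsClosed)
    (hsub : G₀ ≤ Gop D₀)
    (PG : E → E) (PD : H → H)
    (hPG : ∀ u ∈ (Gop D₀).domain, PG u ∈ BDG G₀ D₀ ∧ u - PG u ∈ G₀.domain)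
    (hPD : ∀ w ∈ (Dop G₀).domain, PD w ∈ BDD G₀ D₀ ∧ w - PD w ∈ D₀.domain)
    (M : Set (E × H)) (hM : ∀ p ∈ M, p.1 ∈ (Gop D₀).domain ∧ p.2 ∈ (Dop G₀).domain) :
    IsMaximalMonotoneRelProd
        {q : (E × H) × (E × H) | q.1 ∈ M ∧ q.2 = (Dap G₀ q.1.2, Gap D₀ q.1.1)} ↔
      ∃ hrel : Set (E × E), IsMaximalMonotoneBDG G₀ D₀ hrel ∧
        M = {p : E × H | p.1 ∈ (Gop D₀).domain ∧ p.2 ∈ (Dop G₀).domain ∧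
          (PG p.1, Dap G₀ (PD p.2)) ∈ hrel} := by
  have hs : ∀ v : G₀.domain, NRel D₀ (v : E) (G₀ v) := by
    intro v
    rw [gop_iff D₀ hD₀dense]
    have hv := hsub.1 v.2
    refine ⟨hv, ?_⟩
    simp only [Gap, hv, dif_pos]
    exact (hsub.2 rfl).symm
  have hs' : ∀ v : D₀.domain, NRel G₀ (v : H) (D₀ v) := nrel_symm_sub hs
  have dG : ∀ u ∈ (Gop D₀).domain, Dec G₀ D₀ u (Gap D₀ u) (PG u) (Gap D₀ (PG u)) := by
    intro u hu
    obtain ⟨h1, h2⟩ := hPG u hu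
    rw [mem_bdg_iff G₀ D₀ hD₀dense hs] at h1
    exact ⟨(gop_iff D₀ hD₀dense _ _).2 ⟨hu, rfl⟩, h1.1, h1.2, h2⟩
  have dD : ∀ w ∈ (Dop G₀).domain, Dec D₀ G₀ w (Dap G₀ w) (PD w) (Dap G₀ (PD w)) := by
    intro w hw
    obtain ⟨h1, h2⟩ := hPD w hw
    have h1 := mem_bdd G₀ D₀ hG₀dense hs' _ h1
    exact ⟨(dop_iff G₀ hG₀dense _ _).2 ⟨hw, rfl⟩, h1.1, h1.2, h2⟩
  have hBD : ∀ w ∈ (Dop G₀).domain, Dap G₀ (PD w) ∈ BDG G₀ D₀ := by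
    intro w hw
    have d := dD w hw
    rw [mem_bdg_iff G₀ D₀ hD₀dense hs, ((gop_iff D₀ hD₀dense _ _).1 d.r3).2]
    exact ⟨d.r3, d.r2⟩
  -- the key identity
  have key : ∀ u ∈ (Gop D₀).domain, ∀ u' ∈ (Gop D₀).domain, ∀ w ∈ (Dop G₀).domain,
      ∀ w' ∈ (Dop G₀).domain,
      ((⟪u - u', Dap G₀ w - Dap G₀ w'⟫ : ℂ) + ⟪w - w', Gap D₀ u - Gap D₀ u'⟫).re =
        (innG D₀ (PG u - PG u') (Dap G₀ (PD w) - Dap G₀ (PD w'))).re := by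
    intro u hu u' hu' w hw w' hw'
    have d1 := (dG u hu).sub (dG u' hu')
    have d2 := (dD w hw).sub (dD w' hw')
    have g := green hD₀dense hG₀dense hs d1 d2
    rw [innG, ((gop_iff D₀ hD₀dense _ _).1 d1.r2).2, ((gop_iff D₀ hD₀dense _ _).1 d2.r3).2, ← g,
      Complex.add_re, Complex.add_re]
    congr 1
    rw [← inner_conj_symm, Complex.conj_re]
  -- points over `BD(G)`
  have lift : ∀ x ∈ BDG G₀ D₀, ∀ y ∈ BDG G₀ D₀, ∀ (v : G₀.domain) (s : D₀.domain),
      x + v ∈ (Gop D₀).domain ∧ Gap D₀ y + s ∈ (Dop G₀).domain ∧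
      Gap D₀ (x + v) = Gap D₀ x + G₀ v ∧ Dap G₀ (Gap D₀ y + s) = y + D₀ s ∧
      PG (x + v) = x ∧ Dap G₀ (PD (Gap D₀ y + s)) = y := by
    intro x hx y hy v s
    rw [mem_bdg_iff G₀ D₀ hD₀dense hs] at hx hy
    have d1 := Dec.mk_add hs hx.1 hx.2 v
    have d2 := Dec.mk_add hs' hy.2 hy.1 s
    obtain ⟨a1, a2⟩ := (gop_iff D₀ hD₀dense _ _).1 d1.r1
    obtain ⟨b1, b2⟩ := (dop_iff G₀ hG₀dense _ _).1 d2.r1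
    refine ⟨a1, b1, a2, b2, (dG _ a1).unique hD₀dense hs d1, ?_⟩
    rw [(dD _ b1).unique hG₀dense hs' d2]
    exact ((dop_iff G₀ hG₀dense _ _).1 hy.2).2
  constructor
  · rintro ⟨hmono, hmax⟩
    refine ⟨(fun p : E × H => (PG p.1, Dap G₀ (PD p.2))) '' M, ⟨?_, ?_, ?_⟩, ?_⟩
    · rintro _ ⟨p, hp, rfl⟩
      exact ⟨(hPG _ (hM p hp).1).1, hBD _ (hM p hp).2⟩
    · rintro _ ⟨p, hp, rfl⟩ _ ⟨q, hq, rfl⟩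
      have := hmono (p, (Dap G₀ p.2, Gap D₀ p.1)) ⟨hp, rfl⟩
        (q, (Dap G₀ q.2, Gap D₀ q.1)) ⟨hq, rfl⟩
      exact (key _ (hM p hp).1 _ (hM q hq).1 _ (hM p hp).2 _ (hM q hq).2) ▸ this
    · intro b hb hbm hsb
      refine Set.Subset.antisymm ?_ hsb
      have := hmax {q : (E × H) × (E × H) | (q.1.1 ∈ (Gop D₀).domain ∧ q.1.2 ∈ (Dop G₀).domain ∧
          (PG q.1.1, Dap G₀ (PD q.1.2)) ∈ b) ∧ q.2 = (Dap G₀ q.1.2, Gap D₀ q.1.1)} ?_ ?_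
      · rintro ⟨x, y⟩ hxy
        obtain ⟨hx, hy⟩ := hb hxy
        obtain ⟨l1, l2, l3, l4, l5, l6⟩ := lift x hx y hy 0 0
        have hmem : ((x + ((0 : G₀.domain) : E), Gap D₀ y + ((0 : D₀.domain) : H)) : E × H) ∈ M := by
          have hss := this.subset
          have hm := hss (a := ((x + ((0 : G₀.domain) : E), Gap D₀ y + ((0 : D₀.domain) : H)),
            (Dap G₀ (Gap D₀ y + ((0 : D₀.domain) : H)), Gap D₀ (x + ((0 : G₀.domain) : E)))))
            ⟨⟨l1, l2, by
              show (PG _, Dap G₀ (PD _)) ∈ b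
              rw [l5, l6]; exact hxy⟩, rfl⟩
          exact hm.1
        exact ⟨_, hmem, Prod.ext l5 l6⟩
      · rintro ⟨p, p'⟩ ⟨⟨h1, h2, h3⟩, h4⟩ ⟨q, q'⟩ ⟨⟨k1, k2, k3⟩, k4⟩
        dsimp only at *
        subst h4 k4
        rw [key _ h1 _ k1 _ h2 _ k2]
        exact hbm _ h3 _ k3
      · rintro q ⟨h1, h2⟩
        exact ⟨⟨(hM _ h1).1, (hM _ h1).2, hsb ⟨_, h1, rfl⟩⟩, h2⟩
    · apply Set.Subset.antisymm
      · intro p hp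
        exact ⟨(hM p hp).1, (hM p hp).2, p, hp, rfl⟩
      · rintro p ⟨h1, h2, r, hr, hreq⟩
        have e1 : PG r.1 = PG p.1 := congrArg Prod.fst hreq
        have e2 : Dap G₀ (PD r.2) = Dap G₀ (PD p.2) := congrArg Prod.snd hreq
        have := hmax (insert (p, (Dap G₀ p.2, Gap D₀ p.1))
          {q : (E × H) × (E × H) | q.1 ∈ M ∧ q.2 = (Dap G₀ q.1.2, Gap D₀ q.1.1)}) ?_
          (Set.subset_insert _ _)
        · exact (this.subset (Set.mem_insert _ _)).1
        · have hrM : ∀ q ∈ M, 0 ≤ (innG D₀ (PG r.1 - PG q.1)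
              (Dap G₀ (PD r.2) - Dap G₀ (PD q.2))).re := by
            intro q hq
            rw [← key _ (hM r hr).1 _ (hM q hq).1 _ (hM r hr).2 _ (hM q hq).2]
            exact hmono (r, (Dap G₀ r.2, Gap D₀ r.1)) ⟨hr, rfl⟩
              (q, (Dap G₀ q.2, Gap D₀ q.1)) ⟨hq, rfl⟩
          have hrM' : ∀ q ∈ M, 0 ≤ (innG D₀ (PG q.1 - PG r.1)
              (Dap G₀ (PD q.2) - Dap G₀ (PD r.2))).re := by
            intro q hq
            rw [← key _ (hM q hq).1 _ (hM r hr).1 _ (hM q hq).2 _ (hM r hr).2]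
            exact hmono (q, (Dap G₀ q.2, Gap D₀ q.1)) ⟨hq, rfl⟩
              (r, (Dap G₀ r.2, Gap D₀ r.1)) ⟨hr, rfl⟩
          rintro _ (rfl | ⟨ha, ha'⟩) _ (rfl | ⟨hb, hb'⟩)
          · simp
          · rw [hb']
            dsimp only
            rw [key _ h1 _ (hM _ hb).1 _ h2 _ (hM _ hb).2, ← e1, ← e2]
            exact hrM _ hb
          · rw [ha']
            dsimp only
            rw [key _ (hM _ ha).1 _ h1 _ (hM _ ha).2 _ h2, ← e1, ← e2]
            exact hrM' _ ha
          · exact hmono _ ⟨ha, ha'⟩ _ ⟨hb, hb'⟩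
  · rintro ⟨h, ⟨hsubs, hmono, hmax⟩, hMeq⟩
    have hMmem : ∀ p : E × H, p ∈ M ↔ p.1 ∈ (Gop D₀).domain ∧ p.2 ∈ (Dop G₀).domain ∧
          (PG p.1, Dap G₀ (PD p.2)) ∈ h := by
      intro p; rw [hMeq]; rfl
    have hne : h.Nonempty := by
      by_contra hne
      rw [Set.not_nonempty_iff_eq_empty] at hne
      have h0 : (0 : E) ∈ BDG G₀ D₀ := by
        have r : NRel D₀ (0 : E) 0 := fun u => by simp
        rw [mem_bdg_iff G₀ D₀ hD₀dense hs, ((gop_iff D₀ hD₀dense _ _).1 r).2]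
        exact ⟨r, fun u => by simp⟩
      have := hmax {((0 : E), (0 : E))} (by simpa using h0) (by
        rintro _ rfl _ rfl
        have r : NRel D₀ (0 : E) 0 := fun u => by simp
        simp [innG, ((gop_iff D₀ hD₀dense _ _).1 r).2]) (by simp [hne])
      rw [hne] at this
      exact Set.singleton_ne_empty _ this
    refine ⟨?_, ?_⟩
    · rintro ⟨p, p'⟩ ⟨hp, h4⟩ ⟨q, q'⟩ ⟨hq, k4⟩
      dsimp only at *
      subst h4 k4
      obtain ⟨h1, h2, h3⟩ := (hMmem p).1 hp
      obtain ⟨k1, k2, k3⟩ := (hMmem q).1 hq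
      rw [key _ h1 _ k1 _ h2 _ k2]
      exact hmono _ h3 _ k3
    · intro B hB hAB
      refine Set.Subset.antisymm ?_ hAB
      rintro ⟨⟨u, w⟩, ⟨f, g⟩⟩ hmem
      obtain ⟨⟨x, y⟩, hxy⟩ := hne
      obtain ⟨hx, hy⟩ := hsubs hxy
      have base : ∀ (v : G₀.domain) (s : D₀.domain),
          0 ≤ ((⟪u - (x + v), f - (y + D₀ s)⟫ : ℂ)
            + ⟪w - (Gap D₀ y + s), g - (Gap D₀ x + G₀ v)⟫).re := by
        intro v s
        obtain ⟨l1, l2, l3, l4, l5, l6⟩ := lift x hx y hy v s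
        have := hB _ hmem ((x + v, Gap D₀ y + s), (y + D₀ s, Gap D₀ x + G₀ v)) (hAB ⟨by
          rw [hMmem]
          refine ⟨l1, l2, ?_⟩
          dsimp only
          rw [l5, l6]
          exact hxy, by dsimp only; rw [l3, l4]⟩)
        exact this
      have hx' := (mem_bdg_iff G₀ D₀ hD₀dense hs x).1 hx
      have hy' := (mem_bdg_iff G₀ D₀ hD₀dense hs y).1 hy
      have hw : NRel G₀ w f := by
        have : NRel G₀ (w - Gap D₀ y) (f - y) := by
          apply nrel_of_mono ((⟪u - x, f - y⟫ : ℂ) + ⟪w - Gap D₀ y, g - Gap D₀ x⟫).re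
          intro v
          have b := base (-v) 0
          have e : (⟪(v : E), f - y⟫ : ℂ).re = (⟪f - y, (v : E)⟫ : ℂ).re := by
            rw [← inner_conj_symm, Complex.conj_re]
          rw [LinearPMap.map_zero, LinearPMap.map_neg, Submodule.coe_neg, Submodule.coe_zero,
            add_zero, add_zero,
            show u - (x + -(v : E)) = (u - x) + v by abel,
            show g - (Gap D₀ x + -G₀ v) = (g - Gap D₀ x) + G₀ v by abel,
            inner_add_left, inner_add_right] at b
          simp only [Complex.add_re] at b ⊢
          linarith
        have := this.add hy'.2
        simpa using this
      have hu : NRel D₀ u g := by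
        have : NRel D₀ (u - x) (g - Gap D₀ x) := by
          apply nrel_of_mono ((⟪u - x, f - y⟫ : ℂ) + ⟪w - Gap D₀ y, g - Gap D₀ x⟫).re
          intro s
          have b := base 0 (-s)
          have e : (⟪(s : H), g - Gap D₀ x⟫ : ℂ).re = (⟪g - Gap D₀ x, (s : H)⟫ : ℂ).re := by
            rw [← inner_conj_symm, Complex.conj_re]
          rw [LinearPMap.map_zero, LinearPMap.map_neg, Submodule.coe_neg, Submodule.coe_zero,
            add_zero, add_zero,
            show w - (Gap D₀ y + -(s : H)) = (w - Gap D₀ y) + s by abel,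
            show f - (y + -D₀ s) = (f - y) + D₀ s by abel,
            inner_add_left, inner_add_right] at b
          simp only [Complex.add_re] at b ⊢
          linarith
        have := this.add hx'.1
        simpa using this
      obtain ⟨hu1, rfl⟩ := (gop_iff D₀ hD₀dense _ _).1 hu
      obtain ⟨hw1, rfl⟩ := (dop_iff G₀ hG₀dense _ _).1 hw
      refine ⟨?_, rfl⟩
      rw [hMmem]
      refine ⟨hu1, hw1, ?_⟩
      dsimp only
      have hins := hmax (insert (PG u, Dap G₀ (PD w)) h) ?_ ?_ (Set.subset_insert _ _)
      · exact hins.subset (Set.mem_insert _ _)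
      · exact Set.insert_subset ⟨(hPG u hu1).1, hBD w hw1⟩ hsubs
      · have m1 : ∀ q ∈ h, 0 ≤ (innG D₀ (PG u - q.1) (Dap G₀ (PD w) - q.2)).re ∧
            0 ≤ (innG D₀ (q.1 - PG u) (q.2 - Dap G₀ (PD w))).re := by
          rintro ⟨x, y⟩ hq
          obtain ⟨hx, hy⟩ := hsubs hq
          obtain ⟨l1, l2, l3, l4, l5, l6⟩ := lift x hx y hy 0 0
          have hq' := hAB (a := ((x + ((0 : G₀.domain) : E), Gap D₀ y + ((0 : D₀.domain) : H)),
            (Dap G₀ (Gap D₀ y + ((0 : D₀.domain) : H)), Gap D₀ (x + ((0 : G₀.domain) : E)))))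
            ⟨by
              rw [hMmem]
              refine ⟨l1, l2, ?_⟩
              dsimp only
              rw [l5, l6]
              exact hq, rfl⟩
          have k1 := key _ hu1 _ l1 _ hw1 _ l2
          have k2 := key _ l1 _ hu1 _ l2 _ hw1
          rw [l5, l6] at k1 k2
          exact ⟨k1 ▸ hB _ hmem _ hq', k2 ▸ hB _ hq' _ hmem⟩
        rintro _ (rfl | ha) _ (rfl | hb)
        · have r : NRel D₀ (0 : E) 0 := fun u => by simp
          simp [innG, ((gop_iff D₀ hD₀dense _ _).1 r).2]
        · exact (m1 _ hb).1
        · exact (m1 _ ha).2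
        · exact hmono _ ha _ hb
end
end

section
/- Let E, H, U be complex Hilbert spaces, E₀ ⊆ E with dense and continuous embedding, and L ∈ L(E₀,H), K ∈ L(E₀,U) such that the operator (L,K) : E₀ ⊆ E → H ⊕ U is closed. Define the operator A on E ⊕ H with domain D(A) := {(u,w) ∈ E₀ × H : K^⋄Ku − L^⋄w ∈ E} by A(u,w) := (K^⋄Ku − L^⋄w, Lu), where K^⋄Ku − L^⋄w ∈ E denotes the unique e ∈ E with ⟨e,x⟩_E = ⟨Ku,Kx⟩_U − ⟨w,Lx⟩_H for all x ∈ E₀. Then A (viewed as a relation, namely its graph {((u,w),A(u,w)) : (u,w) ∈ D(A)} ⊆ (E⊕H) ⊕ (E⊕H)) is maximal monotone. -/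
open scoped ComplexInnerProductSpace
open Filter Topology

noncomputable section

variable {E H U E₀ : Type*}
  [NormedAddCommGroup E] [InnerProductSpace ℂ E] [CompleteSpace E]
  [NormedAddCommGroup H] [InnerProductSpace ℂ H] [CompleteSpace H]
  [NormedAddCommGroup U] [InnerProductSpace ℂ U] [CompleteSpace U]
  [NormedAddCommGroup E₀] [InnerProductSpace ℂ E₀] [CompleteSpace E₀]

/-- Closedness of the operator `(L,K) : E₀ ⊆ E → H ⊕ U`: whenever `wₙ` in `E₀` with `wₙ → w`
in `E`, `Lwₙ → v` in `H` and `Kwₙ → z` in `U`, then `w ∈ E₀`, `Lw = v` and `Kw = z`. -/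
def ClosedLK (j : E₀ →L[ℂ] E) (L : E₀ →L[ℂ] H) (K : E₀ →L[ℂ] U) : Prop :=
  ∀ (f : ℕ → E₀) (w : E) (v : H) (z : U),
    Tendsto (fun n => j (f n)) atTop (nhds w) →
    Tendsto (fun n => L (f n)) atTop (nhds v) →
    Tendsto (fun n => K (f n)) atTop (nhds z) →
    ∃ w₀ : E₀, j w₀ = w ∧ L w₀ = v ∧ K w₀ = z

/-- Orthogonal projection onto the closed range of `(j, L, K)`. -/
lemma exists_resolvent (j : E₀ →L[ℂ] E) (L : E₀ →L[ℂ] H) (K : E₀ →L[ℂ] U)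
    (hclosed : ClosedLK j L K) (f : E) (g : H) :
    ∃ u : E₀, ∀ x : E₀, (⟪f - j u, j x⟫ : ℂ) + ⟪g - L u, L x⟫ - ⟪K u, K x⟫ = 0 := by
  let T : E₀ →ₗ[ℂ] WithLp 2 (E × WithLp 2 (H × U)) :=
    { toFun := fun u => WithLp.toLp 2 (j u, WithLp.toLp 2 (L u, K u))
      map_add' := by
        intro x y
        simp only [map_add]
        rfl
      map_smul' := by
        intro c x
        simp only [map_smul]
        rfl }
  have hcl : IsClosed (LinearMap.range T : Set (WithLp 2 (E × WithLp 2 (H × U)))) := by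
    apply IsSeqClosed.isClosed
    intro y y0 hy hlim
    choose v hv using hy
    have h1 : Tendsto (fun n => (y n).fst) atTop (nhds y0.fst) :=
      ((WithLp.prod_continuous_ofLp 2 E (WithLp 2 (H × U))).fst.tendsto y0).comp hlim
    have h2 : Tendsto (fun n => (y n).snd) atTop (nhds y0.snd) :=
      ((WithLp.prod_continuous_ofLp 2 E (WithLp 2 (H × U))).snd.tendsto y0).comp hlim
    have h3 : Tendsto (fun n => (y n).snd.fst) atTop (nhds y0.snd.fst) :=
      ((WithLp.prod_continuous_ofLp 2 H U).fst.tendsto y0.snd).comp h2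
    have h4 : Tendsto (fun n => (y n).snd.snd) atTop (nhds y0.snd.snd) :=
      ((WithLp.prod_continuous_ofLp 2 H U).snd.tendsto y0.snd).comp h2
    simp only [← hv] at h1 h3 h4
    obtain ⟨w, hw1, hw2, hw3⟩ := hclosed v _ _ _ h1 h3 h4
    refine ⟨w, ?_⟩
    change WithLp.toLp 2 (j w, WithLp.toLp 2 (L w, K w)) = y0
    rw [hw1, hw2, hw3]
    rfl
  haveI : CompleteSpace (LinearMap.range T) := hcl.completeSpace_coe
  let z : WithLp 2 (E × WithLp 2 (H × U)) := WithLp.toLp 2 (f, WithLp.toLp 2 (g, 0))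
  obtain ⟨u, hu⟩ : (LinearMap.range T).starProjection z ∈ LinearMap.range T :=
    Submodule.starProjection_apply_mem _ _
  refine ⟨u, fun x => ?_⟩
  have h := Submodule.starProjection_inner_eq_zero (K := LinearMap.range T) z (T x) ⟨x, rfl⟩
  rw [← hu] at h
  simp only [WithLp.prod_inner_apply] at h
  have h' : (⟪f - j u, j x⟫ : ℂ) + (⟪g - L u, L x⟫ + ⟪0 - K u, K x⟫) = 0 := h
  rw [zero_sub, inner_neg_left] at h'
  linear_combination h'

/-- **[Staffans–Weiss 2012, Theorem 1.4].** Let `E₀ ⊆ E` with dense and continuous embedding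
`j` and let `L ∈ L(E₀,H)`, `K ∈ L(E₀,U)` with `(L,K) : E₀ ⊆ E → H ⊕ U` closed. The operator
`A(u,w) := (K^⋄Ku − L^⋄w, Lu)` with domain `D(A) = {(u,w) ∈ E₀ × H : K^⋄Ku − L^⋄w ∈ E}`
(where `e = K^⋄Ku − L^⋄w ∈ E` means `⟪e,x⟫_E = ⟪Ku,Kx⟫_U − ⟪w,Lx⟫_H` for all `x ∈ E₀`),
viewed as a relation on `E ⊕ H` via its graph, is maximal monotone. -/
theorem staffans_maximal_monotone (j : E₀ →L[ℂ] E) (hj_inj : Function.Injective j)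
    (hj_dense : DenseRange j) (L : E₀ →L[ℂ] H) (K : E₀ →L[ℂ] U)
    (hclosed : ClosedLK j L K) :
    IsMaximalMonotoneRelProd
      {q : (E × H) × (E × H) | ∃ u : E₀, j u = q.1.1 ∧ q.2.2 = L u ∧
        ∀ x : E₀, (⟪q.2.1, j x⟫ : ℂ) = ⟪K u, K x⟫ - ⟪q.1.2, L x⟫} := by
  have hmono : IsMonotoneRelProd
      {q : (E × H) × (E × H) | ∃ u : E₀, j u = q.1.1 ∧ q.2.2 = L u ∧
        ∀ x : E₀, (⟪q.2.1, j x⟫ : ℂ) = ⟪K u, K x⟫ - ⟪q.1.2, L x⟫} := by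
    rintro ⟨⟨a, w⟩, ⟨e, l⟩⟩ ⟨u, hu, hl, he⟩ ⟨⟨a', w'⟩, ⟨e', l'⟩⟩ ⟨u', hu', hl', he'⟩
    dsimp only at *
    subst hu hl hu' hl'
    have key : (⟪e - e', j (u - u')⟫ : ℂ)
        = ⟪K (u - u'), K (u - u')⟫ - ⟪w - w', L (u - u')⟫ := by
      rw [inner_sub_left, he, he', map_sub K u u', inner_sub_left (K u) (K u'),
        inner_sub_left w w']
      ring
    rw [← map_sub, ← map_sub, Complex.add_re]
    have h1 : (⟪j (u - u'), e - e'⟫ : ℂ).re = (⟪e - e', j (u - u')⟫ : ℂ).re :=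
      inner_re_symm (𝕜 := ℂ) _ _
    have h2 : 0 ≤ (⟪K (u - u'), K (u - u')⟫ : ℂ).re := inner_self_nonneg (𝕜 := ℂ)
    rw [h1, key, Complex.sub_re]
    linarith
  refine ⟨hmono, fun B hB hCB => Set.Subset.antisymm ?_ hCB⟩
  rintro ⟨⟨a, w⟩, ⟨e, l⟩⟩ hp
  obtain ⟨u, hu⟩ := exists_resolvent j L K hclosed (a + e) (w + l)
  have hc : ((j u, w + l - L u), (a + e - j u, L u)) ∈
      {q : (E × H) × (E × H) | ∃ u : E₀, j u = q.1.1 ∧ q.2.2 = L u ∧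
        ∀ x : E₀, (⟪q.2.1, j x⟫ : ℂ) = ⟪K u, K x⟫ - ⟪q.1.2, L x⟫} := by
    refine ⟨u, rfl, rfl, fun x => ?_⟩
    linear_combination hu x
  have h := hB _ hp _ (hCB hc)
  dsimp only at h
  have e1 : e - (a + e - j u) = -(a - j u) := by abel
  have e2 : w - (w + l - L u) = -(l - L u) := by abel
  rw [e1, e2, inner_neg_right, inner_neg_left, Complex.add_re, Complex.neg_re,
    Complex.neg_re] at h
  have n1 : (⟪a - j u, a - j u⟫ : ℂ).re = ‖a - j u‖ ^ 2 := inner_self_eq_norm_sq (𝕜 := ℂ) _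
  have n2 : (⟪l - L u, l - L u⟫ : ℂ).re = ‖l - L u‖ ^ 2 := inner_self_eq_norm_sq (𝕜 := ℂ) _
  rw [n1, n2] at h
  have z1 : ‖a - j u‖ = 0 := by
    have := sq_nonneg ‖l - L u‖
    have := sq_nonneg ‖a - j u‖
    exact pow_eq_zero_iff two_ne_zero |>.1 (by linarith)
  have z2 : ‖l - L u‖ = 0 := by
    have := sq_nonneg ‖l - L u‖
    have := sq_nonneg ‖a - j u‖
    exact pow_eq_zero_iff two_ne_zero |>.1 (by linarith)
  have a1 : a = j u := sub_eq_zero.1 (norm_eq_zero.1 z1)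
  have a2 : l = L u := sub_eq_zero.1 (norm_eq_zero.1 z2)
  subst a1 a2
  simpa using hc
end
end

section
/- Let h ⊆ BD(G) ⊕ BD(G) be maximal monotone and selfadjoint, and write h = S ⊕ ({0} × U^⊥) with U := closure of [BD(G)]h and S : [BD(G)]h ⊆ U → U the associated nonnegative selfadjoint operator. Let R be a nonnegative selfadjoint operator on U with R ∘ R = S (the square root √S of S). Define E₀ := {u ∈ D(G) : π_{BD(G)}u ∈ D(R)}, L : E₀ → H, u ↦ Gu, and K : E₀ → U, u ↦ Rπ_{BD(G)}u. Then the operator (L,K) : E₀ ⊆ E → H ⊕ U is closed, and, equipping E₀ with the graph norm of (L,K), the data E₀, U, L, K satisfy the hypothesis: E₀ ⊆ E is dense with continuous embedding, G₀ ⊆ L ⊆ G, and K restricted to D(G₀) is zero. -/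
open scoped ComplexInnerProductSpace
open Filter Topology Classical

noncomputable section

variable {E H : Type*}
  [NormedAddCommGroup E] [InnerProductSpace ℂ E] [CompleteSpace E]
  [NormedAddCommGroup H] [InnerProductSpace ℂ H] [CompleteSpace H]

/-- The adjoint relation of `h ⊆ BD(G) ⊕ BD(G)`, namely `h* = {(v,−u) : (u,v) ∈ h}^⊥` with
the orthogonal complement taken in `BD(G) ⊕ BD(G)`: a pair `(x,y) ∈ BD(G) ⊕ BD(G)` belongs
to `h*` iff `⟪v,x⟫_{BD(G)} = ⟪u,y⟫_{BD(G)}` for all `(u,v) ∈ h`. -/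
def adjBDG (G₀ : E →ₗ.[ℂ] H) (D₀ : H →ₗ.[ℂ] E) (h : Set (E × E)) : Set (E × E) :=
  {q | q.1 ∈ BDG G₀ D₀ ∧ q.2 ∈ BDG G₀ D₀ ∧
    ∀ p ∈ h, innG D₀ p.2 q.1 = innG D₀ p.1 q.2}

/-- The pre-set `[BD(G)]h = {u : ∃ v, (u,v) ∈ h}` of a relation `h` on `BD(G)`. -/
def preSetE (h : Set (E × E)) : Set E := {u | ∃ v, (u, v) ∈ h}

/-- The closure of a set `s ⊆ D(G)` inside the Hilbert space `D_G` (with the graph norm),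
in sequential form. -/
def clG (D₀ : H →ₗ.[ℂ] E) (s : Set E) : Set E :=
  {u | u ∈ (Gop D₀).domain ∧ ∃ f : ℕ → E, (∀ n, f n ∈ s) ∧
    Tendsto f atTop (nhds u) ∧ Tendsto (fun n => Gap D₀ (f n)) atTop (nhds (Gap D₀ u))}

lemma gap_of_mem (D₀ : H →ₗ.[ℂ] E) {u : E} (h : u ∈ (Gop D₀).domain) :
    Gap D₀ u = Gop D₀ ⟨u, h⟩ := by
  simp [Gap, h]

lemma gap_sub (D₀ : H →ₗ.[ℂ] E) {u v : E} (hu : u ∈ (Gop D₀).domain)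
    (hv : v ∈ (Gop D₀).domain) : Gap D₀ (u - v) = Gap D₀ u - Gap D₀ v := by
  rw [gap_of_mem D₀ hu, gap_of_mem D₀ hv, gap_of_mem D₀ (Submodule.sub_mem _ hu hv),
    ← LinearPMap.map_sub]
  rfl

lemma gap_zero (D₀ : H →ₗ.[ℂ] E) : Gap D₀ 0 = 0 := by
  rw [gap_of_mem D₀ (Submodule.zero_mem _)]
  exact LinearPMap.map_zero _

lemma gap_graph (D₀ : H →ₗ.[ℂ] E) {u : E} (h : u ∈ (Gop D₀).domain) :
    (u, Gap D₀ u) ∈ (Gop D₀).graph := by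
  rw [gap_of_mem D₀ h]
  exact LinearPMap.mem_graph (Gop D₀) ⟨u, h⟩

lemma gop_closed (D₀ : H →ₗ.[ℂ] E) (hD : Dense (D₀.domain : Set H)) (f : ℕ → E) (w : E) (v : H)
    (hf : ∀ n, f n ∈ (Gop D₀).domain) (h1 : Tendsto f atTop (nhds w))
    (h2 : Tendsto (fun n => Gap D₀ (f n)) atTop (nhds v)) :
    w ∈ (Gop D₀).domain ∧ Gap D₀ w = v := by
  have hc : (Gop D₀).IsClosed := LinearPMap.adjoint_isClosed (T := -D₀) hD
  have hm : (w, v) ∈ ((Gop D₀).graph : Set (E × H)) :=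
    IsClosed.mem_of_tendsto hc (h1.prodMk_nhds h2)
      (Eventually.of_forall fun n => gap_graph D₀ (hf n))
  obtain ⟨y, hy1, hy2⟩ := (LinearPMap.mem_graph_iff _).1 hm
  simp only at hy1 hy2
  subst hy1
  exact ⟨y.2, by rw [gap_of_mem D₀ y.2]; exact hy2⟩

lemma innG_tendsto (D₀ : H →ₗ.[ℂ] E) (u : E) (f : ℕ → E) (w : E)
    (h1 : Tendsto f atTop (nhds w))
    (h2 : Tendsto (fun n => Gap D₀ (f n)) atTop (nhds (Gap D₀ w))) :
    Tendsto (fun n => innG D₀ u (f n)) atTop (nhds (innG D₀ u w)) :=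
  (tendsto_const_nhds.inner h1).add (tendsto_const_nhds.inner h2)

lemma clG_closed (D₀ : H →ₗ.[ℂ] E) (s : Set E) (f : ℕ → E) (w : E)
    (hw : w ∈ (Gop D₀).domain) (hf : ∀ n, f n ∈ clG D₀ s)
    (h1 : Tendsto f atTop (nhds w))
    (h2 : Tendsto (fun n => Gap D₀ (f n)) atTop (nhds (Gap D₀ w))) : w ∈ clG D₀ s := by
  have key : ∀ x ∈ clG D₀ s, (x, Gap D₀ x) ∈ closure ((fun y => (y, Gap D₀ y)) '' s) := by
    rintro x ⟨-, g, hg, hg1, hg2⟩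
    exact mem_closure_of_tendsto (hg1.prodMk_nhds hg2)
      (Eventually.of_forall fun n => ⟨g n, hg n, rfl⟩)
  have hm : (w, Gap D₀ w) ∈ closure ((fun y => (y, Gap D₀ y)) '' s) :=
    isClosed_closure.mem_of_tendsto (h1.prodMk_nhds h2)
      (Eventually.of_forall fun n => key _ (hf n))
  obtain ⟨g, hg, hgl⟩ := mem_closure_iff_seq_limit.1 hm
  choose k hk hkg using hg
  refine ⟨hw, k, hk, ?_, ?_⟩
  · have := (continuous_fst.tendsto _).comp hgl
    refine this.congr fun n => ?_
    simp [← hkg]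
  · have := (continuous_snd.tendsto _).comp hgl
    refine this.congr fun n => ?_
    simp [← hkg]

lemma proj_bound (G₀ : E →ₗ.[ℂ] H) (D₀ : H →ₗ.[ℂ] E) (hsub : G₀ ≤ Gop D₀) (PG : E → E)
    (hPG : ∀ u ∈ (Gop D₀).domain, PG u ∈ BDG G₀ D₀ ∧ u - PG u ∈ G₀.domain)
    {x w : E} (hx : x ∈ (Gop D₀).domain) (hw : w ∈ (Gop D₀).domain) :
    ‖PG x - PG w‖ ^ 2 + ‖Gap D₀ (PG x) - Gap D₀ (PG w)‖ ^ 2 ≤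
      ‖x - w‖ ^ 2 + ‖Gap D₀ x - Gap D₀ w‖ ^ 2 := by
  obtain ⟨⟨hp, hp'⟩, hxp⟩ := hPG x hx
  obtain ⟨⟨hq, hq'⟩, hwq⟩ := hPG w hw
  have he : (x - PG x) - (w - PG w) ∈ G₀.domain := Submodule.sub_mem _ hxp hwq
  have e1 := hp' _ he
  have e2 := hq' _ he
  have ge : Gap D₀ ((x - PG x) - (w - PG w)) =
      (Gap D₀ x - Gap D₀ (PG x)) - (Gap D₀ w - Gap D₀ (PG w)) := by
    rw [gap_sub D₀ (Submodule.sub_mem _ hx hp) (Submodule.sub_mem _ hw hq), gap_sub D₀ hx hp,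
      gap_sub D₀ hw hq]
  unfold innG at e1 e2
  rw [ge] at e1 e2
  set e := (x - PG x) - (w - PG w) with hedef
  set e' := (Gap D₀ x - Gap D₀ (PG x)) - (Gap D₀ w - Gap D₀ (PG w)) with hedef'
  set d := PG x - PG w with hd
  set d' := Gap D₀ (PG x) - Gap D₀ (PG w) with hd'
  have h0 : (⟪d, e⟫ : ℂ) + ⟪d', e'⟫ = 0 := by
    rw [hd, hd', inner_sub_left, inner_sub_left]
    linear_combination e1 - e2
  have a1 : x - w = d + e := by rw [hd, hedef]; abel
  have a2 : Gap D₀ x - Gap D₀ w = d' + e' := by rw [hd', hedef']; abel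
  rw [a1, a2, norm_add_sq (𝕜 := ℂ) d e, norm_add_sq (𝕜 := ℂ) d' e']
  have h1 := congrArg Complex.re h0
  simp only [Complex.add_re, Complex.zero_re] at h1
  simp only [RCLike.re_to_complex]
  nlinarith [sq_nonneg ‖e‖, sq_nonneg ‖e'‖]

/-- [Trostorff 2015, Lemma 3.8]: Let `h ⊆ BD(G) ⊕ BD(G)` be maximal monotone and selfadjoint
with Arens decomposition `h = S ⊕ ({0} × U^⊥)`, `U := closure([BD(G)]h)` (closure in the
graph norm), and let `R = √S` be a nonnegative selfadjoint square root of `S` in `U`, with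
domain `DR`. Put `E₀ := {u ∈ D(G) : π_{BD(G)}u ∈ D(R)}`, `L : E₀ → H, u ↦ Gu` and
`K : E₀ → U, u ↦ Rπ_{BD(G)}u`. Then `(L,K) : E₀ ⊆ E → H ⊕ U` is closed and, equipping `E₀`
with the graph norm of `(L,K)`, the data `E₀, U, L, K` satisfy the hypothesis: `E₀ ⊆ E` is
dense with continuous embedding, `G₀ ⊆ L ⊆ G`, and `K` vanishes on `D(G₀)`. -/
theorem sqrt_data_satisfies_hypothesis (G₀ : E →ₗ.[ℂ] H) (D₀ : H →ₗ.[ℂ] E)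
    (hG₀dense : Dense (G₀.domain : Set E)) (hD₀dense : Dense (D₀.domain : Set H))
    (hG₀closed : G₀.IsClosed) (hD₀closed : D₀.IsClosed)
    (hsub : G₀ ≤ Gop D₀)
    -- the orthogonal projection onto `BD(G)`
    (PG : E → E)
    (hPG : ∀ u ∈ (Gop D₀).domain, PG u ∈ BDG G₀ D₀ ∧ u - PG u ∈ G₀.domain)
    -- `h` is maximal monotone and selfadjoint
    (h : Set (E × E))
    (hmax : IsMaximalMonotoneBDG G₀ D₀ h)
    (hself : h = adjBDG G₀ D₀ h)
    -- the Arens decomposition `h = S ⊕ ({0} × U^⊥)` with `U = clG D₀ (preSetE h)`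
    (S : E → E)
    (hSmem : ∀ u ∈ preSetE h, S u ∈ clG D₀ (preSetE h))
    (hArens : h = {q : E × E | q.1 ∈ preSetE h ∧ ∃ n ∈ BDG G₀ D₀,
      (∀ y ∈ clG D₀ (preSetE h), innG D₀ y n = 0) ∧ q.2 = S q.1 + n})
    -- `R = √S`: a nonnegative selfadjoint operator on `U` with domain `DR` and `R ∘ R = S`
    (DR : Set E) (R : E → E)
    (hDR : DR ⊆ clG D₀ (preSetE h))
    (hRmem : ∀ u ∈ DR, R u ∈ clG D₀ (preSetE h))
    (hRnonneg : ∀ u ∈ DR, 0 ≤ (innG D₀ u (R u)).re)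
    (hRself : {p : E × E | p.1 ∈ DR ∧ p.2 = R p.1} =
      {p : E × E | p.1 ∈ clG D₀ (preSetE h) ∧ p.2 ∈ clG D₀ (preSetE h) ∧
        ∀ u ∈ DR, innG D₀ (R u) p.1 = innG D₀ u p.2})
    (hRR : (∀ u : E, (u ∈ DR ∧ R u ∈ DR) ↔ u ∈ preSetE h) ∧
      ∀ u ∈ preSetE h, R (R u) = S u) :
    -- `(L,K)` is closed (convergence in `U` being graph-norm convergence)
    (∀ (f : ℕ → E) (w : E) (v : H) (z : E),
      (∀ n, f n ∈ (Gop D₀).domain ∧ PG (f n) ∈ DR) →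
      z ∈ clG D₀ (preSetE h) →
      Tendsto f atTop (nhds w) →
      Tendsto (fun n => Gap D₀ (f n)) atTop (nhds v) →
      Tendsto (fun n => R (PG (f n))) atTop (nhds z) →
      Tendsto (fun n => Gap D₀ (R (PG (f n)))) atTop (nhds (Gap D₀ z)) →
      (w ∈ (Gop D₀).domain ∧ PG w ∈ DR ∧ Gap D₀ w = v ∧ R (PG w) = z)) ∧
    -- `E₀ ⊆ E` densely
    Dense {u : E | u ∈ (Gop D₀).domain ∧ PG u ∈ DR} ∧
    -- the embedding `E₀ → E` is continuous w.r.t. the graph norm of `(L,K)`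
    (∃ c : ℝ, 0 < c ∧ ∀ u ∈ (Gop D₀).domain, PG u ∈ DR →
      ‖u‖ ^ 2 ≤ c * (‖u‖ ^ 2 + ‖Gap D₀ u‖ ^ 2 +
        (‖R (PG u)‖ ^ 2 + ‖Gap D₀ (R (PG u))‖ ^ 2))) ∧
    -- `G₀ ⊆ L ⊆ G` (recall `E₀ ⊆ D(G)` and `L = G` on `E₀` hold by definition)
    (∀ u ∈ G₀.domain, u ∈ (Gop D₀).domain ∧ PG u ∈ DR) ∧
    -- `K` vanishes on `D(G₀)`
    (∀ u ∈ G₀.domain, R (PG u) = 0) := by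
  have hdom : ∀ u ∈ G₀.domain, u ∈ (Gop D₀).domain := fun u hu => hsub.1 hu
  have hinn0 : ∀ x, innG D₀ x 0 = 0 := fun x => by simp [innG, gap_zero]
  have hinn0' : ∀ x, innG D₀ 0 x = 0 := fun x => by simp [innG, gap_zero]
  have h0B : (0 : E) ∈ BDG G₀ D₀ := ⟨Submodule.zero_mem _, fun v _ => hinn0' v⟩
  have h0h : ((0 : E), (0 : E)) ∈ h := by
    rw [hself]
    exact ⟨h0B, h0B, fun p _ => by simp [hinn0]⟩
  have h0U : (0 : E) ∈ clG D₀ (preSetE h) :=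
    ⟨Submodule.zero_mem _, fun _ => 0, fun _ => ⟨0, h0h⟩, tendsto_const_nhds, tendsto_const_nhds⟩
  have hR0 : (0 : E) ∈ DR ∧ (0 : E) = R 0 := by
    have : ((0 : E), (0 : E)) ∈ {p : E × E | p.1 ∈ DR ∧ p.2 = R p.1} := by
      rw [hRself]
      exact ⟨h0U, h0U, fun u _ => by simp [hinn0]⟩
    exact this
  have hP0 : ∀ u ∈ G₀.domain, PG u = 0 := by
    intro u hu
    obtain ⟨⟨_, h2⟩, h3⟩ := hPG u (hdom u hu)
    have h4 : PG u ∈ G₀.domain := by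
      have := Submodule.sub_mem _ hu h3
      simpa using this
    have h5 := congrArg Complex.re (h2 _ h4)
    simp only [innG, Complex.add_re, Complex.zero_re] at h5
    have r1 : (⟪PG u, PG u⟫ : ℂ).re = ‖PG u‖ ^ 2 := inner_self_eq_norm_sq (𝕜 := ℂ) (PG u)
    have r2 : (⟪Gap D₀ (PG u), Gap D₀ (PG u)⟫ : ℂ).re = ‖Gap D₀ (PG u)‖ ^ 2 :=
      inner_self_eq_norm_sq (𝕜 := ℂ) _
    rw [r1, r2] at h5
    have : ‖PG u‖ ^ 2 = 0 := by
      nlinarith [sq_nonneg ‖PG u‖, sq_nonneg ‖Gap D₀ (PG u)‖]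
    simpa using this
  have hE : ∀ u ∈ G₀.domain, u ∈ (Gop D₀).domain ∧ PG u ∈ DR := fun u hu =>
    ⟨hdom u hu, by rw [hP0 u hu]; exact hR0.1⟩
  refine ⟨?_, hG₀dense.mono hE, ⟨1, one_pos, fun u _ _ => ?_⟩, hE, fun u hu => ?_⟩
  · intro f w v z hf hz hfw hfv hRz hGRz
    obtain ⟨hw, hwv⟩ := gop_closed D₀ hD₀dense f w v (fun n => (hf n).1) hfw hfv
    subst hwv
    have hb : Tendsto (fun n => ‖f n - w‖ ^ 2 + ‖Gap D₀ (f n) - Gap D₀ w‖ ^ 2) atTop (nhds 0) := by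
      have := ((tendsto_iff_norm_sub_tendsto_zero.1 hfw).pow 2).add
        ((tendsto_iff_norm_sub_tendsto_zero.1 hfv).pow 2)
      simpa using this
    have hbd := fun n => proj_bound G₀ D₀ hsub PG hPG (hf n).1 hw
    have sq0 : ∀ a : ℕ → ℝ, (∀ n, 0 ≤ a n) → Tendsto (fun n => a n ^ 2) atTop (nhds 0) →
        Tendsto a atTop (nhds 0) := by
      intro a ha hl
      have := (Real.continuous_sqrt.tendsto 0).comp hl
      rw [Real.sqrt_zero] at this
      exact this.congr fun n => Real.sqrt_sq (ha n)
    have t1 : Tendsto (fun n => PG (f n)) atTop (nhds (PG w)) := by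
      refine tendsto_iff_norm_sub_tendsto_zero.2 (sq0 _ (fun n => norm_nonneg _) ?_)
      exact squeeze_zero (fun n => sq_nonneg _)
        (fun n => le_trans (le_add_of_nonneg_right (sq_nonneg _)) (hbd n)) hb
    have t2 : Tendsto (fun n => Gap D₀ (PG (f n))) atTop (nhds (Gap D₀ (PG w))) := by
      refine tendsto_iff_norm_sub_tendsto_zero.2 (sq0 _ (fun n => norm_nonneg _) ?_)
      exact squeeze_zero (fun n => sq_nonneg _)
        (fun n => le_trans (le_add_of_nonneg_left (sq_nonneg _)) (hbd n)) hb
    have hU : PG w ∈ clG D₀ (preSetE h) :=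
      clG_closed D₀ _ _ _ (hPG w hw).1.1 (fun n => hDR (hf n).2) t1 t2
    have hmem : (PG w, z) ∈ {p : E × E | p.1 ∈ DR ∧ p.2 = R p.1} := by
      rw [hRself]
      refine ⟨hU, hz, fun u hu => ?_⟩
      refine tendsto_nhds_unique (innG_tendsto D₀ (R u) _ _ t1 t2) ?_
      refine (innG_tendsto D₀ u _ _ hRz hGRz).congr fun n => ?_
      have : (PG (f n), R (PG (f n))) ∈ {p : E × E | p.1 ∈ DR ∧ p.2 = R p.1} := ⟨(hf n).2, rfl⟩
      rw [hRself] at this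
      exact (this.2.2 u hu).symm
    exact ⟨hw, hmem.1, rfl, hmem.2.symm⟩
  · rw [one_mul]
    nlinarith [sq_nonneg ‖Gap D₀ u‖, sq_nonneg ‖R (PG u)‖, sq_nonneg ‖Gap D₀ (R (PG u))‖]
  · rw [hP0 u hu]; exact hR0.2.symm
end
end
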